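/- arXiv:1503.01072 — 3 statements merged into one kernel-verified Lean document; each statement's English description precedes it below -/
import Mathlib

section
/- Let ℓ ≤ n and let S_ℓ ≤ S_n be the subgroup of permutations fixing each of ℓ+1,…,n. Then for every g ∈ S_n, either ν₂(g,χ) = 0 for all irreducible complex characters χ of S(g) = S_ℓ ∩ g S_ℓ g⁻¹, or ν₂(g,χ) = 1 for all such χ. -/
open scoped BigOperators Pointwise Classical
open CategoryTheory

/-- For `H ≤ G` and `g ∈ G`, the stabilizer `S(g) = Stab_H(gH) = H ∩ gHg⁻¹`. -/
def stabCoset {G : Type*} [Group G] (H : Subgroup G) (g : G) : Subgroup G :=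
  H ⊓ Subgroup.map (MulAut.conj g).toMonoidHom H

/-- The `m`-th Frobenius–Schur indicator `ν_m(g,χ)` of the simple object of the
group-theoretical fusion category `C(G,H)` attached to `(g,χ)`:
`ν_m(g,χ) = (1/|S(g)|) Σ_{x ∈ H, (gx)^m ∈ H} conj(χ((gx)^m))`
(recall that for `x ∈ H`, `(gx)^m ∈ H` iff `(gx)^m ∈ S(g)`). -/
noncomputable def nuInd {G : Type*} [Group G] (H : Subgroup G) (g : G) (m : ℕ)
    (χ : ↥(stabCoset H g) → ℂ) : ℂ :=
  (Nat.card ↥(stabCoset H g) : ℂ)⁻¹ *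
    ∑ᶠ x : G, if h : x ∈ H ∧ (g * x) ^ m ∈ stabCoset H g
      then (starRingEnd ℂ) (χ ⟨(g * x) ^ m, h.2⟩) else 0

/-- The classical second Frobenius–Schur indicator `ν₂(θ) = (1/|K|) Σ_{x∈K} θ(x²)`. -/
noncomputable def fsInd {K : Type*} [Group K] (θ : K → ℂ) : ℂ :=
  (Nat.card K : ℂ)⁻¹ * ∑ᶠ x : K, θ (x ^ 2)

/-- The copy of `S_ℓ` inside `S_n`: permutations of `{1,…,n}` (0-indexed as `Fin n`)
fixing each of the points `ℓ+1,…,n` (0-indexed: the points with index `≥ ℓ`). -/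
def fixSubgroup (n ℓ : ℕ) : Subgroup (Equiv.Perm (Fin n)) where
  carrier := {σ | ∀ i : Fin n, ℓ ≤ (i : ℕ) → σ i = i}
  one_mem' := fun _ _ => rfl
  mul_mem' := by
    intro a b ha hb i hi
    simp only [Equiv.Perm.mul_apply, hb i hi, ha i hi]
  inv_mem' := by
    intro a ha i hi
    simp only [Set.mem_setOf_eq] at *
    exact (Equiv.symm_apply_eq a).mpr (ha i hi).symm

namespace FSHelp

/-- Elementwise irreducibility (without nontriviality). -/
def Irr {G V : Type*} [Group G] [AddCommGroup V] [Module ℂ V] (ρ : Representation ℂ G V) : Prop :=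
  ∀ U : Submodule ℂ V, (∀ g, ∀ u ∈ U, ρ g u ∈ U) → U ≠ ⊥ → U = ⊤

/-- Every invariant bilinear form on an irreducible representation is symmetric. -/
def AllSymm (G : Type) [Group G] : Prop :=
  ∀ (V : Type) [AddCommGroup V] [Module ℂ V] [FiniteDimensional ℂ V]
    (ρ : Representation ℂ G V), Irr ρ → ∀ B : V →ₗ[ℂ] V →ₗ[ℂ] ℂ,
    (∀ g x y, B (ρ g x) (ρ g y) = B x y) → ∀ x y, B x y = B y x

theorem Irr.isIrreducible {G V : Type*} [Group G] [AddCommGroup V] [Module ℂ V] [Nontrivial V]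
    {ρ : Representation ℂ G V} (h : Irr ρ) : ρ.IsIrreducible := by
  have : Nontrivial (Subrepresentation ρ) := by
    refine ⟨⊥, ⊤, fun e => ?_⟩
    have := congrArg Subrepresentation.toSubmodule e
    exact bot_ne_top (α := Submodule ℂ V) this
  refine ⟨fun U => ?_⟩
  by_cases hU : U.toSubmodule = ⊥
  · left; exact Subrepresentation.toSubmodule_injective hU
  · right
    exact Subrepresentation.toSubmodule_injective
      (h U.toSubmodule (fun g u hu => U.apply_mem_toSubmodule g hu) hU)

theorem density {G V : Type*} [Group G] [AddCommGroup V] [Module ℂ V] [Nontrivial V]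
    [FiniteDimensional ℂ V]
    {ρ : Representation ℂ G V} (h : Irr ρ) (f : V →ₗ[ℂ] V) :
    ∃ r : MonoidAlgebra ℂ G, ρ.asAlgebraHom r = f := by
  have := h.isIrreducible
  have : IsSimpleModule (MonoidAlgebra ℂ G) ρ.asModule :=
    (Representation.irreducible_iff_isSimpleModule_asModule ρ).mp inferInstance
  have hb : Function.Bijective
      (algebraMap ℂ (Module.End (MonoidAlgebra ℂ G) ρ.asModule)) :=
    IsSimpleModule.algebraMap_end_bijective_of_isAlgClosed ℂ
  let F : Module.End (Module.End (MonoidAlgebra ℂ G) ρ.asModule) ρ.asModule :=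
    { toFun := fun x => ρ.asModuleEquiv.symm (f (ρ.asModuleEquiv x))
      map_add' := by intro x y; simp
      map_smul' := by
        intro c x
        obtain ⟨c, rfl⟩ := hb.2 c
        simp }
  let b := Module.finBasis ℂ V
  obtain ⟨r, hr⟩ := jacobson_density F
    (Finset.univ.image (fun i => ρ.asModuleEquiv.symm (b i)))
  refine ⟨r, b.ext fun i => ?_⟩
  have := hr (ρ.asModuleEquiv.symm (b i)) (Finset.mem_image_of_mem _ (Finset.mem_univ i))
  have h2 := congrArg ρ.asModuleEquiv this
  rw [Representation.asModuleEquiv_map_smul] at h2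
  simpa [F] using h2.symm

theorem exists_minimal {K V : Type*} [Group K] [AddCommGroup V] [Module ℂ V]
    [FiniteDimensional ℂ V] [Nontrivial V] (ρ : Representation ℂ K V) :
    ∃ W : Submodule ℂ V, W ≠ ⊥ ∧ (∀ g, ∀ u ∈ W, ρ g u ∈ W) ∧
      ∀ U : Submodule ℂ V, U ≤ W → (∀ g, ∀ u ∈ U, ρ g u ∈ U) → U ≠ ⊥ → U = W := by
  have hne : {W : Submodule ℂ V | W ≠ ⊥ ∧ (∀ g, ∀ u ∈ W, ρ g u ∈ W)}.Nonempty :=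
    ⟨⊤, top_ne_bot, fun _ _ _ => trivial⟩
  obtain ⟨W, hW, hmin⟩ := WellFounded.has_min
    (wellFounded_lt (α := Submodule ℂ V)) _ hne
  refine ⟨W, hW.1, hW.2, fun U hU hinv hb => ?_⟩
  by_contra hne
  exact hmin U ⟨hb, hinv⟩ (lt_of_le_of_ne hU hne)

theorem step {K G : Type} [Group K] [Group G] [Finite K] (ι : K →* G)
    (hc : ∀ g : G, ∃ h : K, ι h * g * (ι h)⁻¹ = g⁻¹) (hK : AllSymm K) : AllSymm G := by
  intro V _ _ _ ρ hρ B hB x y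
  by_contra hxy
  have := Fintype.ofFinite K
  have hnt : Nontrivial V := by
    by_contra hn
    rw [not_nontrivial_iff_subsingleton] at hn
    exact hxy (by rw [Subsingleton.elim x y])
  let D : V →ₗ[ℂ] V →ₗ[ℂ] ℂ := B - B.flip
  have hD : ∀ u v, D u v = B u v - B v u := fun u v => by simp [D]
  have hDinv : ∀ g u v, D (ρ g u) (ρ g v) = D u v := fun g u v => by
    rw [hD, hD, hB, hB]
  obtain ⟨W, hW0, hWinv, hWmin⟩ := exists_minimal (ρ.comp ι)
  -- the form vanishes on W
  let ρW : Representation ℂ K W :=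
    { toFun := fun k => (ρ (ι k)).restrict (hWinv k)
      map_one' := by ext; simp
      map_mul' := fun a b => by ext; simp }
  have hρW : ∀ k (w : W), ((ρW k w : W) : V) = ρ (ι k) w := fun k w => rfl
  have hirr : Irr ρW := by
    intro U hU hU0
    have h1 : U.map W.subtype = W := by
      apply hWmin
      · exact Submodule.map_subtype_le W U
      · rintro g _ ⟨u, hu, rfl⟩
        exact ⟨ρW g u, hU g u hu, rfl⟩
      · intro h; apply hU0
        exact Submodule.map_injective_of_injective W.subtype_injective (by rw [h, Submodule.map_bot])
    rw [eq_top_iff]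
    rintro w -
    have : (w : V) ∈ U.map W.subtype := by rw [h1]; exact w.2
    obtain ⟨u, hu, e⟩ := this
    have : u = w := Subtype.ext e
    exact this ▸ hu
  have hDW : ∀ u ∈ W, ∀ v ∈ W, D u v = 0 := by
    intro u hu v hv
    have := hK W ρW hirr (B.compl₁₂ W.subtype W.subtype)
      (fun g a b => by simp [hρW, hB]) ⟨u, hu⟩ ⟨v, hv⟩
    simp at this
    rw [hD, this, sub_self]
  -- averaging operator
  let Av : (V →ₗ[ℂ] V) →ₗ[ℂ] (V →ₗ[ℂ] V) :=
    ∑ k : K, (LinearMap.mulLeft ℂ (ρ (ι k))) ∘ₗ (LinearMap.mulRight ℂ (ρ (ι k⁻¹)))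
  have hAv : ∀ f v, Av f v = ∑ k : K, ρ (ι k) (f (ρ (ι k⁻¹) v)) := by
    intro f v
    simp [Av, LinearMap.sum_apply]
  have hmove : ∀ g u v, D (ρ g u) v = D u (ρ g⁻¹ v) := by
    intro g u v
    rw [← hDinv g u, ← Module.End.mul_apply, ← map_mul]; simp
  have hAvg : ∀ (g : G) u v, D (Av (ρ g) u) v = D u (Av (ρ g) v) := by
    intro g u v
    obtain ⟨h, hh⟩ := hc g
    have e1 : ∀ v, Av (ρ g) v = ∑ k : K, ρ (ι k * g * (ι k)⁻¹) v := by
      intro v; rw [hAv]; simp [map_mul]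
    have e2 : Av (ρ g) v = ∑ k : K, ρ (ι k * g * (ι k)⁻¹)⁻¹ v := by
      rw [e1, ← Equiv.sum_comp (Equiv.mulRight h)]
      refine Finset.sum_congr rfl fun k _ => ?_
      congr 2
      simp only [Equiv.coe_mulRight, map_mul, mul_inv_rev, inv_inv]
      rw [← hh]; group
    rw [e1, e2, map_sum, map_sum, LinearMap.sum_apply]
    exact Finset.sum_congr rfl fun k _ => hmove _ _ _
  have hAvall : ∀ f u v, D (Av f u) v = D u (Av f v) := by
    intro f
    obtain ⟨r, rfl⟩ := density hρ f
    induction r using MonoidAlgebra.induction_linear with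
    | zero => intro u v; simp
    | add a b ha hb => intro u v; simp [ha, hb]
    | single g c => intro u v; simp [Representation.asAlgebraHom_single, hAvg]
  obtain ⟨q, hq⟩ := LinearMap.exists_extend (LinearMap.id : W →ₗ[ℂ] W)
  have hqW : ∀ w (hw : w ∈ W), (q w : V) = w := by
    intro w hw
    have := LinearMap.congr_fun hq ⟨w, hw⟩
    simp at this
    rw [this]
  let P := Av (W.subtype ∘ₗ q)
  have hPmem : ∀ v, P v ∈ W := by
    intro v
    rw [hAv]
    exact Submodule.sum_mem _ fun k _ => hWinv k _ (q _).2
  have hPW : ∀ w ∈ W, P w = (Fintype.card K : ℂ) • w := by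
    intro w hw
    rw [hAv]
    have : ∀ k : K, ρ (ι k) ((W.subtype ∘ₗ q) (ρ (ι k⁻¹) w)) = w := by
      intro k
      rw [LinearMap.comp_apply, Submodule.subtype_apply, hqW (ρ (ι k⁻¹) w) (hWinv k⁻¹ w hw),
        ← Module.End.mul_apply, ← map_mul, ← map_mul]
      simp
    simp only [this]
    simp [← Nat.cast_smul_eq_nsmul ℂ]
  have hrad : ∀ w ∈ W, ∀ v, D w v = 0 := by
    intro w hw v
    have h1 : D (P w) v = 0 := by
      rw [hAvall]; exact hDW w hw _ (hPmem v)
    rw [hPW w hw] at h1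
    simpa using h1
  have htop : LinearMap.ker D = ⊤ := by
    apply hρ
    · intro g u hu
      rw [LinearMap.mem_ker] at hu ⊢
      ext v
      rw [hmove, hu]; simp
    · intro h
      apply hW0
      rw [eq_bot_iff, ← h]
      intro w hw
      rw [LinearMap.mem_ker]; ext v
      simpa using hrad w hw v
  have : D x = 0 := by
    rw [← LinearMap.mem_ker, htop]; trivial
  apply hxy
  rw [← sub_eq_zero, ← hD, this]; rfl

theorem base (G : Type) [Group G] [Subsingleton G] : AllSymm G := by
  intro V _ _ _ ρ hρ B hB x y
  by_cases hx : x = 0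
  · simp [hx]
  have : Submodule.span ℂ {x} = ⊤ := by
    apply hρ
    · intro g u hu
      rw [Subsingleton.elim g 1]; simpa using hu
    · simpa using hx
  have hy : y ∈ Submodule.span ℂ {x} := by rw [this]; trivial
  obtain ⟨c, rfl⟩ := Submodule.mem_span_singleton.mp hy
  simp

/-- Permutations supported on `A`. -/
def GA {α : Type} (A : Finset α) : Subgroup (Equiv.Perm α) where
  carrier := {σ | ∀ i, i ∉ A → σ i = i}
  one_mem' := fun _ _ => rfl
  mul_mem' := by
    intro a b ha hb i hi
    rw [Equiv.Perm.mul_apply, hb i hi, ha i hi]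
  inv_mem' := by
    intro a ha i hi
    exact (Equiv.symm_apply_eq a).mpr (ha i hi).symm

theorem mem_GA {α : Type} {A : Finset α} {σ : Equiv.Perm α} :
    σ ∈ GA A ↔ ∀ i, i ∉ A → σ i = i := Iff.rfl

theorem exists_inverter {α : Type} (g : Equiv.Perm α) (a : α) :
    ∃ h : Equiv.Perm α, h a = a ∧ (∀ i, g i = i → h i = i) ∧ h * g * h⁻¹ = g⁻¹ := by
  let s : Setoid α := Equiv.Perm.SameCycle.setoid g
  let r : α → α := fun x => if g.SameCycle a x then a else (Quotient.mk s x).out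
  have hr : ∀ x, g.SameCycle (r x) x := by
    intro x
    by_cases h : g.SameCycle a x
    · simp only [r, if_pos h]; exact h
    · simp only [r, if_neg h]
      exact Quotient.exact (s := s) (Quotient.out_eq (Quotient.mk s x))
  have hrr : ∀ x y, g.SameCycle x y → r x = r y := by
    intro x y hxy
    have e : Quotient.mk s x = Quotient.mk s y := Quotient.sound hxy
    by_cases h : g.SameCycle a x
    · simp only [r, if_pos h, if_pos (h.trans hxy)]
    · have h' : ¬ g.SameCycle a y := fun h' => h (h'.trans hxy.symm)
      simp only [r, if_neg h, if_neg h', e]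
  choose k hk using hr
  let h : α → α := fun x => (g ^ (-k x)) (r x)
  have key : ∀ x (m : ℤ), (g ^ m) (r x) = x → h x = (g ^ (-m)) (r x) := by
    intro x m hm
    have e : (g ^ m) (r x) = (g ^ k x) (r x) := hm.trans (hk x).symm
    have : (g ^ (-k x - m)) ((g ^ m) (r x)) = (g ^ (-k x - m)) ((g ^ k x) (r x)) := by rw [e]
    rw [← Equiv.Perm.mul_apply, ← Equiv.Perm.mul_apply, ← zpow_add, ← zpow_add] at this
    have e1 : -k x - m + m = -k x := by ring
    have e2 : -k x - m + k x = -m := by ring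
    rw [e1, e2] at this
    exact this
  have hsame : ∀ x, g.SameCycle x (h x) := fun x =>
    by
    have h1 : g.SameCycle (r x) x := ⟨k x, hk x⟩
    exact h1.symm.trans ⟨-k x, rfl⟩
  have hinv : Function.Involutive h := by
    intro x
    have e := hrr _ _ (hsame x)
    have := key (h x) (-k x) (by rw [← e])
    rw [this, ← e, neg_neg, hk]
  refine ⟨hinv.toPerm, ?_, ?_, ?_⟩
  · have ra : r a = a := by simp only [r, if_pos (Equiv.Perm.SameCycle.refl g a)]
    have := key a 0 (by simp [ra])
    rw [Function.Involutive.coe_toPerm, this]; simp [ra]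
  · intro i hi
    rw [Function.Involutive.coe_toPerm]
    obtain ⟨m, hm⟩ := hsame i
    rw [← hm]
    exact (Function.IsFixedPt.perm_zpow (e := g) hi m)
  · rw [mul_inv_eq_iff_eq_mul]
    ext x
    simp only [Equiv.Perm.mul_apply, Function.Involutive.coe_toPerm]
    have e : r (g x) = r x := (hrr x (g x) ⟨1, by simp⟩).symm
    have := key (g x) (1 + k x) (by rw [e, zpow_add, Equiv.Perm.mul_apply, hk]; simp)
    rw [this, e, neg_add, zpow_add, Equiv.Perm.mul_apply]
    simp [h]

theorem inverter_mem {α : Type} (A : Finset α) (a : α) (g : GA (insert a A)) :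
    ∃ h : GA A, (h : Equiv.Perm α) * g * (h : Equiv.Perm α)⁻¹ = (g : Equiv.Perm α)⁻¹ := by
  obtain ⟨h, ha, hf, hh⟩ := exists_inverter (g : Equiv.Perm α) a
  refine ⟨⟨h, fun i hi => ?_⟩, hh⟩
  by_cases e : i = a
  · rw [e, ha]
  · exact hf i (g.2 i (by simp [e, hi]))

theorem GA_mono {α : Type} {A B : Finset α} (h : A ⊆ B) : GA A ≤ GA B :=
  fun _ hσ i hi => hσ i (fun hA => hi (h hA))

theorem allSymm_GA {α : Type} [Finite α] (A : Finset α) : AllSymm (GA A) := by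
  induction A using Finset.induction_on with
  | empty =>
    have : Subsingleton (GA (∅ : Finset α)) := by
      refine ⟨fun x y => Subtype.ext (Equiv.ext fun i => ?_)⟩
      rw [x.2 i (by simp), y.2 i (by simp)]
    exact base _
  | insert a A _ ih =>
    refine step (Subgroup.inclusion (GA_mono (Finset.subset_insert a A))) (fun g => ?_) ih
    obtain ⟨h, hh⟩ := inverter_mem A a g
    exact ⟨h, Subtype.ext hh⟩

theorem conj_inv_GA {α : Type} (A : Finset α) (g : GA A) :
    ∃ h : GA A, h * g * h⁻¹ = g⁻¹ := by
  by_cases hA : A.Nonempty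
  · obtain ⟨a, ha⟩ := hA
    have e : insert a A = A := Finset.insert_eq_of_mem ha
    obtain ⟨h, hh⟩ := inverter_mem A a ⟨g, by rw [e]; exact g.2⟩
    exact ⟨h, Subtype.ext hh⟩
  · refine ⟨1, Subtype.ext (Equiv.ext fun i => ?_)⟩
    have hi : i ∉ A := fun h => hA ⟨i, h⟩
    rw [(g⁻¹).2 i hi, (1 * g * 1⁻¹).2 i hi]

theorem irr_of_simple {G : Type} [Group G] (V : FDRep ℂ G) [Simple V] : Irr V.ρ := by
  intro U hU hU0
  let σ : Representation ℂ G U :=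
    { toFun := fun k => (V.ρ k).restrict (hU k)
      map_one' := by ext; simp
      map_mul' := fun a b => by ext; simp }
  let f : FDRep.of σ ⟶ V :=
    { hom := FGModuleCat.ofHom U.subtype
      comm := by
        intro g
        ext u
        rfl }
  have hmono : Mono f := ConcreteCategory.mono_of_injective f U.subtype_injective
  have hne : f ≠ 0 := by
    intro h0
    apply hU0
    rw [eq_bot_iff]
    intro u hu
    have h1 : f.hom = 0 := by rw [h0]; rfl
    have h2 := congrArg (fun t => t.hom.hom ⟨u, hu⟩) h1
    exact h2
  have : IsIso f := isIso_of_mono_of_nonzero hne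
  have hs : Function.Surjective U.subtype :=
    (FDRep.isoToLinearEquiv (asIso f)).surjective
  rw [← Submodule.range_subtype U]
  exact LinearMap.range_eq_top.mpr hs

theorem fs_sum {G : Type} [Group G] [Fintype G] (hG : AllSymm G)
    (hc : ∀ g : G, ∃ h : G, h * g * h⁻¹ = g⁻¹) (V : FDRep ℂ G) [Simple V] :
    (Nat.card G : ℂ)⁻¹ * ∑ x : G, V.character (x ^ 2) = 1 := by
  have hirr := irr_of_simple V
  have hn : (Nat.card G : ℂ) ≠ 0 := by simp [Nat.card_eq_fintype_card]
  have : Invertible (Nat.card G : ℂ) := invertibleOfNonzero hn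
  have hortho := FDRep.char_orthonormal V V
  rw [if_pos ⟨Iso.refl V⟩] at hortho
  let b := Module.finBasis ℂ V
  have hchar : ∀ f : V →ₗ[ℂ] V, LinearMap.trace ℂ V f = ∑ i, b.coord i (f (b i)) := by
    intro f
    rw [LinearMap.trace_eq_matrix_trace ℂ b, Matrix.trace]
    simp [LinearMap.toMatrix_apply]
  have hch : ∀ g, V.character g = ∑ i, b.coord i (V.ρ g (b i)) := fun g => hchar _
  have hsq : ∀ g, V.character (g ^ 2) =
      ∑ i, ∑ j, b.coord i (V.ρ g (b j)) * b.coord j (V.ρ g (b i)) := by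
    intro g
    rw [hch]
    refine Finset.sum_congr rfl fun i _ => ?_
    have e : V.ρ (g ^ 2) (b i) = V.ρ g (V.ρ g (b i)) := by
      rw [pow_two, map_mul, Module.End.mul_apply]
    rw [e]
    conv_lhs => rw [← b.sum_repr (V.ρ g (b i))]
    simp only [map_sum, map_smul, smul_eq_mul, Module.Basis.coord_apply]
    exact Finset.sum_congr rfl fun j _ => mul_comm _ _
  have hsymm : ∀ i j, ∑ g, b.coord i (V.ρ g (b i)) * b.coord j (V.ρ g (b j)) =
      ∑ g, b.coord i (V.ρ g (b j)) * b.coord j (V.ρ g (b i)) := by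
    intro i j
    let B : V →ₗ[ℂ] V →ₗ[ℂ] ℂ :=
      ∑ g : G, (LinearMap.mul ℂ ℂ).compl₁₂ (b.coord i ∘ₗ V.ρ g) (b.coord j ∘ₗ V.ρ g)
    have hB : ∀ x y, B x y = ∑ g, b.coord i (V.ρ g x) * b.coord j (V.ρ g y) := by
      intro x y; simp [B, LinearMap.sum_apply]
    have := hG V V.ρ hirr B (fun h x y => by
      rw [hB, hB]
      symm
      rw [← Equiv.sum_comp (Equiv.mulRight h)]
      refine (Finset.sum_congr rfl fun g _ => ?_)
      simp [map_mul]) (b i) (b j)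
    rwa [hB, hB] at this
  rw [← hortho]
  congr 1
  have hinv : ∀ g, V.character g⁻¹ = V.character g := by
    intro g
    obtain ⟨h, hh⟩ := hc g
    rw [← hh, FDRep.char_conj]
  simp only [hinv, hsq]
  simp only [hch, Finset.sum_mul_sum]
  rw [Finset.sum_comm, Finset.sum_comm (s := (Finset.univ : Finset G))]
  refine Finset.sum_congr rfl fun i _ => ?_
  rw [Finset.sum_comm, Finset.sum_comm (s := (Finset.univ : Finset G))]
  exact Finset.sum_congr rfl fun j _ => (hsymm i j).symm

theorem fs_one {α : Type} [Finite α] (S : Subgroup (Equiv.Perm α)) (A : Finset α)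
    (hS : S = GA A) [Fintype S] (V : FDRep ℂ S) [Simple V] :
    (Nat.card S : ℂ)⁻¹ * ∑ x : S, V.character (x ^ 2) = 1 := by
  subst hS
  exact fs_sum (allSymm_GA A) (conj_inv_GA A) V

end FSHelp

/-- For `S_ℓ ⊆ S_n` and any `g ∈ S_n`: either `ν₂(g,χ) = 0` for all irreducible complex
characters `χ` of `S(g)`, or `ν₂(g,χ) = 1` for all such `χ`. -/
theorem stmt_10 (n ℓ : ℕ) (hl : ℓ ≤ n) (g : Equiv.Perm (Fin n)) :
    (∀ (V : FDRep ℂ ↥(stabCoset (fixSubgroup n ℓ) g)), Simple V →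
      nuInd (fixSubgroup n ℓ) g 2 V.character = 0) ∨
    (∀ (V : FDRep ℂ ↥(stabCoset (fixSubgroup n ℓ) g)), Simple V →
      nuInd (fixSubgroup n ℓ) g 2 V.character = 1) := by
  classical
  set H := fixSubgroup n ℓ with hH
  set S := stabCoset H g with hSdef
  let A : Finset (Fin n) := Finset.univ.filter
    (fun i => ¬ (ℓ ≤ (i : ℕ) ∨ ℓ ≤ ((g⁻¹ i : Fin n) : ℕ)))
  have hA : ∀ i, i ∉ A ↔ (ℓ ≤ (i : ℕ) ∨ ℓ ≤ ((g⁻¹ i : Fin n) : ℕ)) := by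
    intro i; simp only [A, Finset.mem_filter, Finset.mem_univ, true_and, not_not]
  have memH : ∀ σ, σ ∈ H ↔ ∀ i : Fin n, ℓ ≤ (i : ℕ) → σ i = i := fun σ => Iff.rfl
  have hS : S = FSHelp.GA A := by
    ext σ
    rw [FSHelp.mem_GA, hSdef, stabCoset, Subgroup.mem_inf, memH]
    have e : σ ∈ Subgroup.map (MulAut.conj g).toMonoidHom H ↔
        ∀ i : Fin n, ℓ ≤ ((g⁻¹ i : Fin n) : ℕ) → σ i = i := by
      constructor
      · rintro ⟨τ, hτ, rfl⟩ i hi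
        have h1 : τ (g⁻¹ i) = g⁻¹ i := hτ _ hi
        change g (τ (g⁻¹ i)) = i
        rw [h1]; simp
      · intro h
        refine ⟨g⁻¹ * σ * g, fun i hi => ?_, by simp [MulAut.conj_apply, mul_assoc]⟩
        have := h (g i) (by simpa using hi)
        simp [this]
    rw [e]
    constructor
    · rintro ⟨h1, h2⟩ i hi
      rcases (hA i).1 hi with h | h
      · exact h1 i h
      · exact h2 i h
    · intro h
      exact ⟨fun i hi => h i ((hA i).2 (Or.inl hi)), fun i hi => h i ((hA i).2 (Or.inr hi))⟩
  have memS : ∀ σ, σ ∈ S ↔ ∀ i, i ∉ A → σ i = i := fun σ => by rw [hS]; rfl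
  -- points outside `A`
  have hcase : ∀ i, i ∉ A → (ℓ ≤ (i : ℕ) ∨ ∃ b : Fin n, ℓ ≤ (b : ℕ) ∧ i = g b) := by
    intro i hi
    rcases (hA i).1 hi with h | h
    · exact Or.inl h
    · exact Or.inr ⟨g⁻¹ i, h, by simp⟩
  have hB1 : ∀ b : Fin n, ℓ ≤ (b : ℕ) → b ∉ A := fun b hb => (hA b).2 (Or.inl hb)
  have hB2 : ∀ b : Fin n, ℓ ≤ (b : ℕ) → g b ∉ A := fun b hb => (hA _).2 (Or.inr (by simpa using hb))
  -- values of an admissible element outside `A`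
  have hval : ∀ x, x ∈ H → (g * x) ^ 2 ∈ S → ∀ b : Fin n, ℓ ≤ (b : ℕ) →
      (g * x) b = g b ∧ (g * x) (g b) = b := by
    intro x hx hx2 b hb
    have h1 : (g * x) b = g b := by rw [Equiv.Perm.mul_apply, hx b hb]
    refine ⟨h1, ?_⟩
    have h2 := (memS _).1 hx2 b (hB1 b hb)
    rwa [pow_two, Equiv.Perm.mul_apply, h1] at h2
  by_cases hex : ∃ x, x ∈ H ∧ (g * x) ^ 2 ∈ S
  · right
    intro V hV
    obtain ⟨x0, hx0, hx02⟩ := hex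
    have hv0 := hval x0 hx0 hx02
    let y : Fin n → Fin n := fun i => if i ∈ A then i else (g * x0) i
    have hyA : ∀ i, i ∈ A → y i = i := fun i hi => if_pos hi
    have hyB : ∀ b : Fin n, ℓ ≤ (b : ℕ) → y b = g b := fun b hb => by
      simp only [y, if_neg (hB1 b hb), (hv0 b hb).1]
    have hygB : ∀ b : Fin n, ℓ ≤ (b : ℕ) → y (g b) = b := fun b hb => by
      simp only [y, if_neg (hB2 b hb), (hv0 b hb).2]
    have hyinv : Function.Involutive y := by
      intro i
      by_cases hi : i ∈ A
      · rw [hyA i hi, hyA i hi]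
      · rcases hcase i hi with h | ⟨b, hb, rfl⟩
        · rw [hyB i h, hygB i h]
        · rw [hygB b hb, hyB b hb]
    let Y : Equiv.Perm (Fin n) := hyinv.toPerm
    have hY : ∀ i, Y i = y i := fun i => rfl
    have hYY : Y * Y = 1 := Equiv.ext fun i => hyinv i
    have hSH : ∀ s, s ∈ S → s ∈ H := fun s hs => hs.1
    have hx1 : g⁻¹ * Y ∈ H := by
      intro i hi
      rw [Equiv.Perm.mul_apply, hY, hyB i hi]; simp
    have hcomm : ∀ s : S, Y * s = s * Y := by
      intro s
      have hs := (memS _).1 s.2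
      ext i : 1
      rw [Equiv.Perm.mul_apply, Equiv.Perm.mul_apply]
      by_cases hi : i ∈ A
      · have : (s : Equiv.Perm (Fin n)) i ∈ A := by
          by_contra hc
          have h1 := hs _ hc
          exact hc (by rw [(s : Equiv.Perm (Fin n)).injective h1]; exact hi)
        rw [hY, hY, hyA _ this, hyA _ hi]
      · rw [hs i hi]
        rcases hcase i hi with h | ⟨b, hb, rfl⟩
        · rw [hY, hyB i h, hs _ (hB2 i h)]
        · rw [hY, hygB b hb, hs _ (hB1 b hb)]
    have hsq : ∀ s : S, (g * (g⁻¹ * Y * s)) ^ 2 = (s : Equiv.Perm (Fin n)) ^ 2 := by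
      intro s
      rw [mul_assoc, mul_inv_cancel_left, pow_two, pow_two]
      calc Y * s * (Y * s) = Y * (s * Y) * s := by group
        _ = Y * (Y * s) * s := by rw [hcomm]
        _ = (Y * Y) * (s * s) := by group
        _ = _ := by rw [hYY, one_mul]
    have hone := FSHelp.fs_one S A hS V
    rw [nuInd, finsum_eq_sum_of_fintype]
    have hsum : ∑ s : S, (starRingEnd ℂ) (V.character (s ^ 2)) =
        ∑ x : Equiv.Perm (Fin n), if h : x ∈ H ∧ (g * x) ^ 2 ∈ stabCoset H g
          then (starRingEnd ℂ) (V.character ⟨(g * x) ^ 2, h.2⟩) else 0 := by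
      refine Fintype.sum_of_injective (fun s : S => g⁻¹ * Y * (s : Equiv.Perm (Fin n)))
        ?_ _ _ ?_ ?_
      · intro s t hst
        exact Subtype.ext (mul_left_cancel hst)
      · intro x hx
        rw [dif_neg]
        rintro ⟨hxH, hx2⟩
        apply hx
        have hv := hval x hxH hx2
        refine ⟨⟨Y * (g * x), (memS _).2 fun i hi => ?_⟩, ?_⟩
        · rw [Equiv.Perm.mul_apply, hY]
          rcases hcase i hi with h | ⟨b, hb, rfl⟩
          · rw [(hv i h).1, hygB i h]
          · rw [(hv b hb).2, hyB b hb]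
        · change g⁻¹ * Y * (Y * (g * x)) = x
          rw [mul_assoc, ← mul_assoc Y Y, hYY, one_mul, inv_mul_cancel_left]
      · intro s
        have hmem : g⁻¹ * Y * (s : Equiv.Perm (Fin n)) ∈ H ∧
            (g * (g⁻¹ * Y * (s : Equiv.Perm (Fin n)))) ^ 2 ∈ stabCoset H g :=
          ⟨H.mul_mem hx1 (hSH _ s.2), by rw [hsq]; exact S.pow_mem s.2 2⟩
        rw [dif_pos hmem]
        congr 2
        exact Subtype.ext (hsq s).symm
    rw [← hsum, ← map_sum]
    have := congrArg (starRingEnd ℂ) hone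
    simpa using this
  · left
    intro V hV
    rw [nuInd]
    have : ∀ x : Equiv.Perm (Fin n), (if h : x ∈ H ∧ (g * x) ^ 2 ∈ stabCoset H g
          then (starRingEnd ℂ) (V.character ⟨(g * x) ^ 2, h.2⟩) else 0) = 0 := by
      intro x
      rw [dif_neg]
      exact fun h => hex ⟨x, h⟩
    simp only [this, finsum_zero, mul_zero]
end

section
/- Let H = A_n ≤ G = S_n. Then for every g ∈ S_n and every irreducible complex character χ of S(g) = A_n ∩ g A_n g⁻¹, the indicator ν₂(g,χ) equals 0 or 1. (Equivalently: all simple objects of the group-theoretical fusion category C(S_n, A_n) have Frobenius–Schur indicator 0 or 1.) -/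
open scoped BigOperators Pointwise Classical
open CategoryTheory

section FSHelpers

/-- every permutation is conjugate to its inverse through a permutation fixing a given point -/
lemma exists_conj_inv_fix {α : Type*} (g : Equiv.Perm α) (a : α) :
    ∃ k : Equiv.Perm α, k a = a ∧ k * g * k⁻¹ = g⁻¹ := by
  classical
  have hr : ∃ r : α → α, r a = a ∧ (∀ x, ∃ i : ℤ, x = (g ^ i) (r x)) ∧
      ∀ x y, g.SameCycle x y → r x = r y := by
    let S := Equiv.Perm.SameCycle.setoid g
    refine ⟨fun x => if g.SameCycle a x then a else (Quotient.mk S x).out,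
      by simp [Equiv.Perm.SameCycle.refl], ?_, ?_⟩
    · intro x
      by_cases h : g.SameCycle a x
      · obtain ⟨i, hi⟩ := h
        exact ⟨i, by
          have h : g.SameCycle a x := ⟨i, hi⟩
          simp only [h, if_true]; exact hi.symm⟩
      · simp only [h, if_false]
        have : g.SameCycle (Quotient.mk S x).out x := Quotient.mk_out (s := S) x
        obtain ⟨i, hi⟩ := this
        exact ⟨i, hi.symm⟩
    · intro x y hxy
      have h1 : g.SameCycle a x ↔ g.SameCycle a y := ⟨fun h => h.trans hxy, fun h => h.trans hxy.symm⟩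
      have h2 : Quotient.mk S x = Quotient.mk S y := Quotient.sound hxy
      simp only [h1, h2]
  obtain ⟨r, hra, hri, hrs⟩ := hr
  choose i hi using hri
  have key : ∀ (x : α) (j : ℤ), x = (g ^ j) (r x) → (g ^ (-(i x))) (r x) = (g ^ (-j)) (r x) := by
    intro x j hj
    have h := (hi x).symm.trans hj
    have h2 : (g ^ (-j - i x)) ((g ^ (i x)) (r x)) = (g ^ (-j - i x)) ((g ^ j) (r x)) := by rw [h]
    rw [← Equiv.Perm.mul_apply, ← Equiv.Perm.mul_apply, ← zpow_add, ← zpow_add] at h2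
    rw [show -j - i x + i x = -j by ring, show -j - i x + j = - i x by ring] at h2
    exact h2.symm
  let k : α → α := fun x => (g ^ (-(i x))) (r x)
  have hrk : ∀ x, r (k x) = r x := fun x =>
    (hrs _ _ ⟨-(i x), rfl⟩ : r (r x) = r (k x)).symm.trans (hrs _ _ ⟨i x, (hi x).symm⟩)
  have hinv : Function.Involutive k := by
    intro x
    have := key (k x) (-(i x)) (by rw [hrk])
    change (g ^ (-(i (k x)))) (r (k x)) = x
    rw [this, hrk, neg_neg]
    exact (hi x).symm
  have hkg : ∀ x, k (g x) = g⁻¹ (k x) := by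
    intro x
    have hr : r (g x) = r x := (hrs _ _ ⟨1, by simp⟩ : r x = r (g x)).symm
    have := key (g x) (i x + 1) (by
      rw [hr, add_comm, zpow_add, Equiv.Perm.mul_apply, ← hi x, zpow_one])
    change (g ^ (-(i (g x)))) (r (g x)) = g⁻¹ ((g ^ (-(i x))) (r x))
    rw [this, hr, neg_add, add_comm, zpow_add, Equiv.Perm.mul_apply, zpow_neg_one]
  refine ⟨hinv.toPerm k, ?_, ?_⟩
  · have := key a 0 (by simp [hra])
    change (g ^ (-(i a))) (r a) = a
    rw [this, hra]; simp
  · rw [mul_inv_eq_iff_eq_mul]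
    ext x
    exact hkg x

variable {G : Type*} [Group G] [Fintype G]
variable {U : Type*} [AddCommGroup U] [Module ℂ U]

/-- the commutant consists of scalars -/
def ScalarComm {G : Type*} [Group G] {U : Type*} [AddCommGroup U] [Module ℂ U]
    (ρ : G →* Module.End ℂ U) : Prop :=
  ∀ T : Module.End ℂ U, (∀ g, Commute T (ρ g)) → ∃ c : ℂ, T = c • 1

lemma commute_sum_conj {K : Type*} [Group K] [Fintype K] (ρ : K →* Module.End ℂ U)
    (X : Module.End ℂ U) (g : K) : Commute (∑ k, ρ k * X * ρ k⁻¹) (ρ g) := by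
  change _ * _ = _ * _
  rw [Finset.sum_mul, Finset.mul_sum]
  refine Fintype.sum_bijective (fun k => g⁻¹ * k) (Group.mulLeft_bijective _) _ _ ?_
  intro k
  simp only [mul_assoc, ← map_mul, mul_inv_rev, inv_inv]
  simp only [← mul_assoc, ← map_mul, mul_inv_cancel, one_mul]

lemma exists_equivariant_proj (ρ : G →* Module.End ℂ U) (p : Submodule ℂ U)
    (hp : ∀ g, ∀ x ∈ p, ρ g x ∈ p) :
    ∃ E : Module.End ℂ U, (∀ g, Commute E (ρ g)) ∧ (∀ x, E x ∈ p) ∧ ∀ x ∈ p, E x = x := by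
  obtain ⟨f, hf⟩ := p.subtype.exists_leftInverse_of_injective p.ker_subtype
  let π : Module.End ℂ U := p.subtype ∘ₗ f
  have h1 : ∀ x, π x ∈ p := fun x => (f x).2
  have h2 : ∀ x ∈ p, π x = x := fun x hx => by
    have := LinearMap.congr_fun hf ⟨x, hx⟩
    exact congrArg Subtype.val this
  have hc : (Fintype.card G : ℂ) ≠ 0 := by simp
  refine ⟨(Fintype.card G : ℂ)⁻¹ • ∑ k, ρ k * π * ρ k⁻¹, ?_, ?_, ?_⟩
  · intro g
    exact (commute_sum_conj ρ π g).smul_left _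
  · intro x
    rw [LinearMap.smul_apply, LinearMap.sum_apply]
    exact p.smul_mem _ (p.sum_mem fun k _ => hp _ _ (h1 _))
  · intro x hx
    rw [LinearMap.smul_apply, LinearMap.sum_apply]
    have : ∀ k ∈ Finset.univ, (ρ k * π * ρ k⁻¹) x = x := by
      intro k _
      rw [Module.End.mul_apply, Module.End.mul_apply, h2 _ (hp _ _ hx), ← Module.End.mul_apply,
        ← map_mul]
      simp
    rw [Finset.sum_congr rfl this, Finset.sum_const, Finset.card_univ, ← Nat.cast_smul_eq_nsmul ℂ,
      smul_smul, inv_mul_cancel₀ hc, one_smul]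

lemma ScalarComm.bot_or_top {ρ : G →* Module.End ℂ U} (h : ScalarComm ρ) (p : Submodule ℂ U)
    (hp : ∀ g, ∀ x ∈ p, ρ g x ∈ p) : p = ⊥ ∨ p = ⊤ := by
  obtain ⟨E, hE, h1, h2⟩ := exists_equivariant_proj ρ p hp
  obtain ⟨c, rfl⟩ := h E hE
  by_cases hc : c = 0
  · left
    rw [eq_bot_iff]
    intro x hx
    have := h2 x hx
    simp [hc] at this
    simp [this]
  · right
    rw [eq_top_iff]
    intro x _
    have := p.smul_mem c⁻¹ (h1 x)
    simpa [smul_smul, hc] using this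

lemma ScalarComm.proportional [FiniteDimensional ℂ U] {ρ : G →* Module.End ℂ U} (h : ScalarComm ρ)
    {U' : Type*} [AddCommGroup U'] [Module ℂ U'] [FiniteDimensional ℂ U']
    (hd : Module.finrank ℂ U = Module.finrank ℂ U') (ρ' : G → Module.End ℂ U')
    (f f' : U →ₗ[ℂ] U') (hf : ∀ g, f ∘ₗ ρ g = ρ' g ∘ₗ f) (hf' : ∀ g, f' ∘ₗ ρ g = ρ' g ∘ₗ f')
    (h0 : f ≠ 0) : Function.Injective f ∧ ∃ c : ℂ, f' = c • f := by
  have hk : LinearMap.ker f = ⊥ := by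
    rcases h.bot_or_top (LinearMap.ker f) (by
      intro g x hx
      have := LinearMap.congr_fun (hf g) x
      simp only [LinearMap.comp_apply] at this
      rw [LinearMap.mem_ker] at hx ⊢
      rw [this, hx, map_zero]) with h | h
    · exact h
    · exact absurd (LinearMap.ker_eq_top.mp h) h0
  have hi := LinearMap.ker_eq_bot.mp hk
  refine ⟨hi, ?_⟩
  let e := LinearEquiv.ofInjectiveOfFinrankEq f hi hd
  have he : ∀ x, e x = f x := fun x => rfl
  obtain ⟨c, hc⟩ := h ((e.symm : U' →ₗ[ℂ] U) ∘ₗ f') (by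
    intro g
    ext x
    apply e.injective
    simp only [Module.End.mul_apply, LinearMap.comp_apply, LinearEquiv.coe_coe,
      LinearEquiv.apply_symm_apply]
    have h1 := LinearMap.congr_fun (hf' g) x
    have h2 := LinearMap.congr_fun (hf g) (e.symm (f' x))
    simp only [LinearMap.comp_apply] at h1 h2
    rw [he, h1, h2, ← he, LinearEquiv.apply_symm_apply])
  refine ⟨c, ?_⟩
  ext x
  have := congrArg e (LinearMap.congr_fun hc x)
  simp only [LinearMap.comp_apply, LinearEquiv.coe_coe, LinearEquiv.apply_symm_apply] at this
  rw [this]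
  simp [he]

/-- double commutant -/
lemma mem_span_of_doubleCommutant [FiniteDimensional ℂ U] (ρ : G →* Module.End ℂ U)
    (f : Module.End ℂ U)
    (hf : ∀ T : Module.End ℂ U, (∀ g, Commute T (ρ g)) → Commute f T) :
    ∃ a : G → ℂ, f = ∑ g, a g • ρ g := by
  classical
  let r : Representation ℂ G U := ρ
  let F : Module.End (Module.End (MonoidAlgebra ℂ G) r.asModule) r.asModule :=
    { toFun := fun x => r.asModuleEquiv.symm (f (r.asModuleEquiv x))
      map_add' := by intro x y; simp
      map_smul' := by
        intro T x
        let T' : Module.End ℂ U :=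
          (r.asModuleEquiv : _ →ₗ[ℂ] U) ∘ₗ (T.restrictScalars ℂ) ∘ₗ
            (r.asModuleEquiv.symm : U →ₗ[ℂ] _)
        have hT : ∀ g, Commute T' (ρ g) := by
          intro g
          ext x
          have h1 := r.asModuleEquiv_symm_map_rho g x
          have h2 := T.map_smul (MonoidAlgebra.of ℂ G g) (r.asModuleEquiv.symm x)
          have h3 := r.asModuleEquiv_map_smul (MonoidAlgebra.of ℂ G g) (T (r.asModuleEquiv.symm x))
          rw [Representation.asAlgebraHom_of] at h3
          change r.asModuleEquiv (T (r.asModuleEquiv.symm (r g x))) =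
            r g (r.asModuleEquiv (T (r.asModuleEquiv.symm x)))
          rw [h1, h2, h3]
        have := LinearMap.congr_fun (hf T' hT) (r.asModuleEquiv x)
        have h4 : f (r.asModuleEquiv (T (r.asModuleEquiv.symm (r.asModuleEquiv x)))) =
          r.asModuleEquiv (T (r.asModuleEquiv.symm (f (r.asModuleEquiv x)))) := this
        rw [LinearEquiv.symm_apply_apply] at h4
        change r.asModuleEquiv.symm (f (r.asModuleEquiv (T x))) = T _
        rw [h4, LinearEquiv.symm_apply_apply] }
  let b := Module.finBasis ℂ U
  obtain ⟨a, ha⟩ := jacobson_density F (Finset.univ.image fun i => r.asModuleEquiv.symm (b i))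
  refine ⟨fun g => a.coeff g, ?_⟩
  apply b.ext
  intro i
  have h1 := congrArg r.asModuleEquiv (ha (r.asModuleEquiv.symm (b i)) (by simp))
  rw [r.asModuleEquiv_map_smul, Representation.asAlgebraHom_def, MonoidAlgebra.lift_apply,
    Finsupp.sum_fintype _ _ (by simp)] at h1
  simpa [F] using h1

lemma selfAdjoint_of_conj_inv {K : Type*} [Group K] [Fintype K] (φ : K →* G)
    (hφ : ∀ g, ∃ k, φ k * g * (φ k)⁻¹ = g⁻¹)
    (ρ : G →* Module.End ℂ U) (Q : U →ₗ[ℂ] U →ₗ[ℂ] ℂ)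
    (hQ : ∀ g u v, Q (ρ g u) (ρ g v) = Q u v) (a : G → ℂ) (T : Module.End ℂ U)
    (hT : T = ∑ g, a g • ρ g) (hc : ∀ k, Commute T (ρ (φ k))) (u v : U) :
    Q (T u) v = Q u (T v) := by
  have hadj : ∀ g u v, Q (ρ g u) v = Q u (ρ g⁻¹ v) := by
    intro g u v
    rw [← hQ g u (ρ g⁻¹ v), ← Module.End.mul_apply, ← map_mul]
    simp
  have hcard : (Fintype.card K : ℂ) ≠ 0 := by simp
  have hA : ∀ g u v, Q ((∑ k, ρ (φ k * g * (φ k)⁻¹)) u) v = Q u ((∑ k, ρ (φ k * g * (φ k)⁻¹)) v) := by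
    intro g u v
    obtain ⟨k0, hk0⟩ := hφ g
    simp only [LinearMap.sum_apply, map_sum]
    refine (Fintype.sum_bijective (fun k => k * k0⁻¹) (Group.mulRight_bijective _) _ _ ?_)
    intro k
    rw [hadj]
    have : (φ k * g * (φ k)⁻¹)⁻¹ = φ (k * k0⁻¹) * g * (φ (k * k0⁻¹))⁻¹ := by
      have h2 : g⁻¹ = (φ k0)⁻¹ * g * φ k0 := by
        have h3 : φ k0 * g⁻¹ * (φ k0)⁻¹ = g := by
          have := congrArg (fun x => x⁻¹) hk0
          simpa [mul_assoc] using this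
        calc g⁻¹ = (φ k0)⁻¹ * (φ k0 * g⁻¹ * (φ k0)⁻¹) * φ k0 := by group
          _ = _ := by rw [h3]
      simp only [mul_inv_rev, inv_inv, map_mul, map_inv, h2]
      group
    rw [this]
  have hTK : (Fintype.card K : ℂ) • T = ∑ g, a g • ∑ k, ρ (φ k * g * (φ k)⁻¹) := by
    have h1 : ∀ k ∈ Finset.univ, ρ (φ k) * T * ρ (φ k)⁻¹ = T := by
      intro k _
      rw [← (hc k).eq, mul_assoc, ← map_mul]
      simp
    have h2 := Finset.sum_congr rfl h1
    rw [Finset.sum_const, Finset.card_univ, ← Nat.cast_smul_eq_nsmul ℂ] at h2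
    rw [← h2]
    simp only [Finset.smul_sum]
    rw [Finset.sum_comm]
    refine Finset.sum_congr rfl fun k _ => ?_
    conv_lhs => rw [hT]
    rw [Finset.mul_sum, Finset.sum_mul]
    refine Finset.sum_congr rfl fun g _ => ?_
    rw [mul_smul_comm, smul_mul_assoc, map_mul, map_mul]
  have h3 : Q (((Fintype.card K : ℂ) • T) u) v = Q u (((Fintype.card K : ℂ) • T) v) := by
    rw [hTK]
    rw [LinearMap.sum_apply, LinearMap.sum_apply, map_sum, map_sum, LinearMap.sum_apply]
    refine Finset.sum_congr rfl fun g _ => ?_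
    rw [LinearMap.smul_apply, LinearMap.smul_apply, map_smul, map_smul, LinearMap.smul_apply, hA]
  simp only [LinearMap.smul_apply, map_smul, smul_eq_mul] at h3
  exact mul_left_cancel₀ hcard h3

lemma flip_const_of_all_selfAdjoint [Nontrivial U] (Q : U →ₗ[ℂ] U →ₗ[ℂ] ℂ) (c : ℂ)
    (hnd : ∀ u, (∀ v, Q u v = 0) → u = 0) (hc : ∀ u v, Q v u = c * Q u v)
    (hT : ∀ (T : Module.End ℂ U) u v, Q (T u) v = Q u (T v)) : c = 1 := by
  obtain ⟨u, hu⟩ := exists_ne (0 : U)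
  have : ∃ w, Q u w ≠ 0 := by
    by_contra! h
    exact hu (hnd u h)
  obtain ⟨w, hw⟩ := this
  have hw0 : w ≠ 0 := by rintro rfl; simp at hw
  obtain ⟨f, hf⟩ : ∃ f : Module.Dual ℂ U, f w = 1 := Module.Projective.exists_dual_eq_one ℂ hw0
  have h := hT (f.smulRight w) u w
  simp only [LinearMap.smulRight_apply, map_smul, LinearMap.smul_apply, smul_eq_mul, hf] at h
  have hww : Q w w ≠ 0 := by
    intro h0
    rw [h0] at h
    simp at h
    exact hw h.symm
  have := hc w w
  exact (mul_right_cancel₀ hww (by rw [one_mul]; exact this)).symm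

lemma perm_flip_const_aux (N : ℕ) : ∀ (M : ℕ) (α : Type) [Fintype α] [DecidableEq α]
    (_ : Fintype.card α ≤ N)
    (U : Type*) [AddCommGroup U] [Module ℂ U] [FiniteDimensional ℂ U] [Nontrivial U]
    (_ : Module.finrank ℂ U ≤ M)
    (ρ : Equiv.Perm α →* Module.End ℂ U) (Q : U →ₗ[ℂ] U →ₗ[ℂ] ℂ) (c : ℂ)
    (_ : ∀ g u v, Q (ρ g u) (ρ g v) = Q u v)
    (_ : ∀ u, (∀ v, Q u v = 0) → u = 0) (_ : ∀ u v, Q v u = c * Q u v)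
    (_ : ∀ T : Module.End ℂ U, (∀ g, Commute T (ρ g)) → ∀ u v, Q (T u) v = Q u (T v)), c = 1 := by
  induction N with
  | zero =>
    intro M α _ _ hα U _ _ _ _ hM ρ Q c hQ hnd hc hT
    have hE : IsEmpty α := Fintype.card_eq_zero_iff.mp (by omega)
    refine flip_const_of_all_selfAdjoint Q c hnd hc fun T => hT T fun g => ?_
    rw [Subsingleton.elim g 1, map_one]
    exact Commute.one_right T
  | succ N ihN =>
    intro M
    induction M with
    | zero =>
      intro α _ _ hα U _ _ _ _ hM ρ Q c hQ hnd hc hT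
      have := Module.finrank_pos (R := ℂ) (M := U)
      omega
    | succ M ihM =>
      intro α _ _ hα U _ _ _ _ hM ρ Q c hQ hnd hc hT
      by_cases hS : ScalarComm ρ
      · rcases isEmpty_or_nonempty α with hE | ⟨⟨a⟩⟩
        · refine ihN _ α (by simp) U le_rfl ρ Q c hQ hnd hc hT
        · have hcard : Fintype.card {x // x ≠ a} ≤ N := by
            have : Fintype.card {x // x ≠ a} < Fintype.card α :=
              Fintype.card_subtype_lt (x := a) (by simp)
            omega
          refine ihN _ {x // x ≠ a} hcard U le_rfl
            (ρ.comp (Equiv.Perm.ofSubtype (p := fun x => x ≠ a))) Q c (fun g => hQ _) hnd hc ?_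
          intro T hTc
          obtain ⟨co, hco⟩ := mem_span_of_doubleCommutant ρ T (by
            intro T' hT'
            obtain ⟨d, rfl⟩ := hS T' hT'
            exact (Commute.one_right T).smul_right d)
          refine selfAdjoint_of_conj_inv (Equiv.Perm.ofSubtype (p := fun x => x ≠ a)) ?_ ρ Q hQ
            co T hco hTc
          intro g
          obtain ⟨k, hka, hk⟩ := exists_conj_inv_fix g a
          have h1 : ∀ x, k x ≠ a ↔ x ≠ a := by
            intro x
            rw [not_iff_not]
            constructor
            · intro h
              exact k.injective (h.trans hka.symm)
            · rintro rfl
              exact hka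
          refine ⟨k.subtypePerm h1, ?_⟩
          rw [Equiv.Perm.ofSubtype_subtypePerm h1]
          · exact hk
          · rintro x hx rfl
            exact hx hka
      · -- find a proper nonzero invariant subspace
        unfold ScalarComm at hS
        push Not at hS
        obtain ⟨T, hTc, hTs⟩ := hS
        obtain ⟨μ, hμ⟩ := Module.End.exists_eigenvalue T
        let T1 : Module.End ℂ U := T - μ • 1
        have hT1c : ∀ g, Commute T1 (ρ g) := fun g =>
          (hTc g).sub_left ((Commute.one_left _).smul_left μ)
        let W := LinearMap.ker T1
        have hWinv : ∀ g, ∀ x ∈ W, ρ g x ∈ W := by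
          intro g x hx
          have := LinearMap.congr_fun (hT1c g).eq x
          rw [Module.End.mul_apply, Module.End.mul_apply, LinearMap.mem_ker.mp hx, map_zero] at this
          exact LinearMap.mem_ker.mpr this
        have hWtop : W ≠ ⊤ := by
          intro h
          exact hTs μ (sub_eq_zero.mp (LinearMap.ker_eq_top.mp h))
        obtain ⟨w, hw⟩ := hμ.exists_hasEigenvector
        have hwW : w ∈ W := by
          rw [LinearMap.mem_ker]
          simp [T1, hw.apply_eq_smul]
        have hWn : Nontrivial W := ⟨⟨⟨w, hwW⟩, 0, fun h => hw.2 (congrArg Subtype.val h)⟩⟩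
        obtain ⟨E, hEc, hE1, hE2⟩ := exists_equivariant_proj ρ W hWinv
        have hlt : Module.finrank ℂ W < Module.finrank ℂ U :=
          Submodule.finrank_lt hWtop
        let ρW : Equiv.Perm α →* Module.End ℂ W :=
          { toFun := fun g => (ρ g).restrict (hWinv g)
            map_one' := by ext x; simp
            map_mul' := by intro g h; ext x; simp }
        have hρW : ∀ g (x : W), ((ρW g x : W) : U) = ρ g x := fun g x => rfl
        refine ihM α hα W (by omega) ρW (Q.compl₁₂ W.subtype W.subtype) c ?_ ?_ ?_ ?_
        · intro g u v
          exact hQ g u v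
        · intro u hu
          apply Subtype.ext
          apply hnd
          intro v
          have h1 := hT E hEc u v
          rw [hE2 u u.2] at h1
          rw [h1]
          exact hu ⟨E v, hE1 v⟩
        · intro u v
          exact hc u v
        · intro S hSc u v
          let S' : Module.End ℂ U := W.subtype ∘ₗ S ∘ₗ E.codRestrict W hE1
          have hS' : ∀ x : W, S' x = S x := by
            intro x
            change ((S ⟨E x, _⟩ : W) : U) = S x
            congr 2
            exact Subtype.ext (hE2 x x.2)
          have h1 := hT S' (by
            intro g
            ext x
            change ((S ⟨E (ρ g x), _⟩ : W) : U) = ρ g (S ⟨E x, _⟩ : W)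
            have h2 := LinearMap.congr_fun (hSc g).eq ⟨E x, hE1 x⟩
            rw [Module.End.mul_apply, Module.End.mul_apply] at h2
            have h3 := congrArg Subtype.val h2
            rw [hρW] at h3
            rw [← h3]
            congr 2
            apply Subtype.ext
            rw [hρW]
            exact LinearMap.congr_fun (hEc g).eq x) u v
          rw [hS', hS'] at h1
          exact h1

/-- trace computation for the (twisted) Frobenius-Schur indicator -/
lemma twisted_indicator [FiniteDimensional ℂ U] (ρ : G →* Module.End ℂ U) (hS : ScalarComm ρ)
    (σ : G →* G)
    (hsym : ∀ B : U →ₗ[ℂ] U →ₗ[ℂ] ℂ, (∀ h u v, B (ρ h u) (ρ (σ h) v) = B u v) →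
      ∀ u v, B u v = B v u) :
    (Fintype.card G : ℂ)⁻¹ * ∑ h, LinearMap.trace ℂ U (ρ h * ρ (σ h)) = 0 ∨
    (Fintype.card G : ℂ)⁻¹ * ∑ h, LinearMap.trace ℂ U (ρ h * ρ (σ h)) = 1 := by
  have hcard : (Fintype.card G : ℂ) ≠ 0 := by simp
  let b := Module.finBasis ℂ U
  let P : (U →ₗ[ℂ] U →ₗ[ℂ] ℂ) → (U →ₗ[ℂ] U →ₗ[ℂ] ℂ) := fun B =>
    ∑ h, B.compl₁₂ (ρ h) (ρ (σ h))
  have hP : ∀ B u v, P B u v = ∑ h, B (ρ h u) (ρ (σ h) v) := by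
    intro B u v
    simp [P]
  have hPinv : ∀ B h u v, P B (ρ h u) (ρ (σ h) v) = P B u v := by
    intro B h u v
    rw [hP, hP]
    refine Fintype.sum_bijective (fun k => k * h) (Group.mulRight_bijective h) _ _ ?_
    intro k
    simp
  let E := fun i j => LinearMap.mk₂ ℂ (fun u v : U => b.coord i u * b.coord j v)
    (by intros; simp [add_mul]) (by intros; simp [mul_assoc]) (by intros; simp [mul_add])
    (by intros; simp; ring)
  have hE : ∀ i j u v, E i j u v = b.coord i u * b.coord j v := fun i j u v => rfl
  have htr : ∑ h, LinearMap.trace ℂ U (ρ h * ρ (σ h)) = ∑ i, ∑ j, P (E i j) (b i) (b j) := by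
    have h1 : ∀ h, LinearMap.trace ℂ U (ρ h * ρ (σ h)) =
        ∑ i, ∑ j, E i j (ρ h (b j)) (ρ (σ h) (b i)) := by
      intro h
      rw [LinearMap.trace_eq_matrix_trace ℂ b, LinearMap.toMatrix_mul, Matrix.trace]
      refine Finset.sum_congr rfl fun i _ => ?_
      rw [Matrix.diag_apply, Matrix.mul_apply]
      refine Finset.sum_congr rfl fun j _ => ?_
      rw [LinearMap.toMatrix_apply, LinearMap.toMatrix_apply, hE]
      rfl
    simp only [h1]
    rw [Finset.sum_comm]
    refine Finset.sum_congr rfl fun i _ => ?_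
    rw [Finset.sum_comm]
    refine Finset.sum_congr rfl fun j _ => ?_
    rw [hsym _ (hPinv _), hP]
  by_cases hB : ∃ B : U →ₗ[ℂ] U →ₗ[ℂ] ℂ, (∀ h u v, B (ρ h u) (ρ (σ h) v) = B u v) ∧ B ≠ 0
  · right
    obtain ⟨B, hBi, hB0⟩ := hB
    have hprop : ∀ B' : U →ₗ[ℂ] U →ₗ[ℂ] ℂ, (∀ h u v, B' (ρ h u) (ρ (σ h) v) = B' u v) →
        ∃ c : ℂ, B' = c • B := by
      intro B' hB'
      have hh : ∀ B' : U →ₗ[ℂ] U →ₗ[ℂ] ℂ, (∀ h u v, B' (ρ h u) (ρ (σ h) v) = B' u v) →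
          ∀ g, B' ∘ₗ ρ g = Module.Dual.transpose (R := ℂ) (ρ (σ g⁻¹)) ∘ₗ B' := by
        intro B' hB' g
        ext u v
        change B' (ρ g u) v = B' u (ρ (σ g⁻¹) v)
        rw [← hB' g u, ← Module.End.mul_apply, ← map_mul, ← map_mul]
        simp
      exact (hS.proportional (U' := Module.Dual ℂ U) (Subspace.dual_finrank_eq).symm
        (fun g => Module.Dual.transpose (R := ℂ) (ρ (σ g⁻¹))) B B' (hh B hBi) (hh B' hB') hB0).2
    choose c hc using fun i j => hprop (P (E i j)) (hPinv _)
    have hBE : B = ∑ i, ∑ j, B (b i) (b j) • E i j := by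
      apply b.ext
      intro k
      apply b.ext
      intro l
      simp only [LinearMap.sum_apply, LinearMap.smul_apply, hE]
      simp [Finsupp.single_apply]
    have hPB : P B = (Fintype.card G : ℂ) • B := by
      ext u v
      rw [hP]
      simp [hBi]
    have hsum : (Fintype.card G : ℂ) • B = (∑ i, ∑ j, B (b i) (b j) * c i j) • B := by
      have h1 : P B = ∑ i, ∑ j, B (b i) (b j) • P (E i j) := by
        ext u v
        simp only [LinearMap.sum_apply, LinearMap.smul_apply, hP]
        conv_lhs => rw [hBE]
        simp only [LinearMap.sum_apply, LinearMap.smul_apply, Finset.smul_sum]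
        rw [Finset.sum_comm]
        refine Finset.sum_congr rfl fun i _ => ?_
        rw [Finset.sum_comm]
      rw [← hPB, h1, Finset.sum_smul]
      refine Finset.sum_congr rfl fun i _ => ?_
      rw [Finset.sum_smul]
      refine Finset.sum_congr rfl fun j _ => ?_
      rw [mul_smul, ← hc]
    have hsum2 := smul_left_injective ℂ hB0 hsum
    rw [htr]
    have : ∑ i, ∑ j, P (E i j) (b i) (b j) = ∑ i, ∑ j, B (b i) (b j) * c i j := by
      refine Finset.sum_congr rfl fun i _ => Finset.sum_congr rfl fun j _ => ?_
      rw [hc]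
      simp [mul_comm]
    rw [this, ← hsum2, inv_mul_cancel₀ hcard]
  · left
    push Not at hB
    rw [htr]
    have : ∀ i j, P (E i j) = 0 := fun i j => hB _ (hPinv _)
    simp [this]

lemma alt_form_symm (n : ℕ) (H : Subgroup (Equiv.Perm (Fin n)))
    (hH : ∀ x, x ∈ H ↔ Equiv.Perm.sign x = 1) (s t : Equiv.Perm (Fin n)) (hss : s * s = 1)
    (hs : Equiv.Perm.sign s = -1) (ht : t = 1 ∨ t = s) {V : Type*} [AddCommGroup V] [Module ℂ V]
    [FiniteDimensional ℂ V] (ρ : H →* Module.End ℂ V) (hS : ScalarComm ρ) (σ : H →* H)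
    (hσ : ∀ h : H, (σ h : Equiv.Perm (Fin n)) = t * h * t)
    (B : V →ₗ[ℂ] V →ₗ[ℂ] ℂ) (hB : ∀ h u v, B (ρ h u) (ρ (σ h) v) = B u v) (u v : V) :
    B u v = B v u := by
  classical
  by_cases hB0 : B = 0
  · simp [hB0]
  have htt : t * t = 1 := by rcases ht with rfl | rfl <;> simp [hss]
  have hσσ : ∀ h, σ (σ h) = h := by
    intro h
    apply Subtype.ext
    rw [hσ, hσ]
    calc t * (t * ↑h * t) * t = (t * t) * h * (t * t) := by group
      _ = h := by rw [htt]; simp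
  -- nondegeneracy and the flip constant
  have hh : ∀ B' : V →ₗ[ℂ] V →ₗ[ℂ] ℂ, (∀ h u v, B' (ρ h u) (ρ (σ h) v) = B' u v) →
      ∀ g, B' ∘ₗ ρ g = Module.Dual.transpose (R := ℂ) (ρ (σ g⁻¹)) ∘ₗ B' := by
    intro B' hB' g
    ext u v
    change B' (ρ g u) v = B' u (ρ (σ g⁻¹) v)
    rw [← hB' g u, ← Module.End.mul_apply, ← map_mul, ← map_mul]
    simp
  obtain ⟨hinj, c, hc⟩ := hS.proportional (U' := Module.Dual ℂ V) (Subspace.dual_finrank_eq).symm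
    (fun g => Module.Dual.transpose (R := ℂ) (ρ (σ g⁻¹))) B B.flip (hh B hB) (hh B.flip (by
      intro h u v
      have := hB (σ h) v u
      rw [hσσ] at this
      exact this)) hB0
  have hnd : ∀ u, (∀ v, B u v = 0) → u = 0 := by
    intro u hu
    apply hinj
    rw [map_zero]
    ext v
    exact hu v
  have hcB : ∀ u v, B v u = c * B u v := by
    intro u v
    have := LinearMap.congr_fun (LinearMap.congr_fun hc u) v
    simpa using this
  suffices hc1 : c = 1 by rw [hcB v u, hc1, one_mul]
  have hV : Nontrivial V := by
    by_contra h
    rw [not_nontrivial_iff_subsingleton] at h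
    apply hB0
    ext u v
    rw [Subsingleton.elim u 0]
    simp
  -- the extension by zero
  let r : Equiv.Perm (Fin n) → Module.End ℂ V := fun x => if h : x ∈ H then ρ ⟨x, h⟩ else 0
  have r_in : ∀ (h : H), r h = ρ h := fun h => by simp [r]
  have r_out : ∀ x, x ∉ H → r x = 0 := fun x hx => by simp [r, hx]
  have hsH : s ∉ H := by rw [hH, hs]; decide
  have hxs : ∀ x, x ∈ H → x * s ∉ H := fun x hx h => hsH ((H.mul_mem_cancel_left hx).mp h)
  have hsx : ∀ x, x ∈ H → s * x ∉ H := fun x hx h => hsH ((H.mul_mem_cancel_right hx).mp h)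
  have hxs' : ∀ x, x ∉ H → x * s ∈ H := by
    intro x hx
    rw [hH] at hx ⊢
    rw [Equiv.Perm.sign_mul, hs, (Int.units_eq_one_or _).resolve_left hx]; decide
  have hsx' : ∀ x, x ∉ H → s * x ∈ H := by
    intro x hx
    rw [hH] at hx ⊢
    rw [Equiv.Perm.sign_mul, hs, (Int.units_eq_one_or _).resolve_left hx]; decide
  have hsxs : ∀ x, x ∈ H → s * x * s ∈ H := fun x hx => hxs' _ (hsx x hx)
  have r_one : r 1 = 1 := by
    have := r_in 1
    rw [map_one] at this
    exact this
  have r_mul : ∀ x y, x ∈ H → r (x * y) = r x * r y := by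
    intro x y hx
    by_cases hy : y ∈ H
    · have := r_in (⟨x, hx⟩ * ⟨y, hy⟩)
      rw [map_mul, ← r_in, ← r_in] at this
      exact this
    · rw [r_out y hy, r_out (x * y) (fun h => hy ((H.mul_mem_cancel_left hx).mp h)), mul_zero]
  have r_key : ∀ x y, r (x * y) = r x * r y + r (x * s) * r (s * y) := by
    intro x y
    by_cases hx : x ∈ H
    · rw [r_out _ (hxs x hx), zero_mul, add_zero, r_mul x y hx]
    · rw [r_out x hx, zero_mul, zero_add, ← r_mul _ _ (hxs' x hx)]
      congr 1
      calc x * y = x * (s * s) * y := by rw [hss]; simp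
        _ = _ := by group
  let ρU : Equiv.Perm (Fin n) →* Module.End ℂ (V × V) :=
    { toFun := fun x => LinearMap.prod (LinearMap.coprod (r x) (r (x * s)))
        (LinearMap.coprod (r (s * x)) (r (s * x * s)))
      map_one' := by
        rw [one_mul, mul_one, r_out s hsH, hss, r_one]
        ext <;> simp
      map_mul' := by
        intro x y
        have e1 := r_key x y
        have e2 := r_key x (y * s)
        have e3 := r_key (s * x) y
        have e4 := r_key (s * x) (y * s)
        simp only [← mul_assoc] at e1 e2 e3 e4
        apply LinearMap.ext
        rintro ⟨u, v⟩
        change (r (x * y) u + r (x * y * s) v, r (s * (x * y)) u + r (s * (x * y) * s) v) =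
          (r x (r y u + r (y * s) v) + r (x * s) (r (s * y) u + r (s * y * s) v),
           r (s * x) (r y u + r (y * s) v) + r (s * x * s) (r (s * y) u + r (s * y * s) v))
        simp only [← mul_assoc, e1, e2, e3, e4, LinearMap.add_apply, Module.End.mul_apply, map_add]
        apply Prod.ext
        · simp only
          abel
        · simp only
          abel }
  have hρU : ∀ x u v, ρU x (u, v) = (r x u + r (x * s) v, r (s * x) u + r (s * x * s) v) :=
    fun x u v => rfl
  have hρU_in : ∀ x, x ∈ H → ∀ u v, ρU x (u, v) = (r x u, r (s * x * s) v) := by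
    intro x hx u v
    rw [hρU, r_out _ (hxs x hx), r_out _ (hsx x hx)]
    simp
  have hρU_out : ∀ x, x ∉ H → ∀ u v, ρU x (u, v) = (r (x * s) v, r (s * x) u) := by
    intro x hx u v
    rw [hρU, r_out _ hx, r_out (s * x * s) (hxs _ (hsx' x hx))]
    simp
  have hρU_s : ∀ u v, ρU s (u, v) = (v, u) := by
    intro u v
    rw [hρU_out s hsH, hss, r_one]
    simp
  -- structure of the commutant
  have hcomm : ∀ T : Module.End ℂ (V × V), (∀ g, Commute T (ρU g)) →
      ∃ (a : ℂ) (b : Module.End ℂ V), (∀ u v, T (u, v) = (a • u + b v, b u + a • v)) ∧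
        ∀ h : H, b ∘ₗ ρ h = r (s * h * s) ∘ₗ b := by
    intro T hT
    let A : Module.End ℂ V := LinearMap.fst ℂ V V ∘ₗ T ∘ₗ LinearMap.inl ℂ V V
    let b : Module.End ℂ V := LinearMap.snd ℂ V V ∘ₗ T ∘ₗ LinearMap.inl ℂ V V
    have hTu : ∀ u, T (u, 0) = (A u, b u) := fun u => rfl
    have hTv : ∀ v, T (0, v) = (b v, A v) := by
      intro v
      have h1 : T (ρU s (v, 0)) = ρU s (T (v, 0)) := LinearMap.congr_fun (hT s).eq (v, 0)
      rw [hTu, hρU_s, hρU_s] at h1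
      exact h1
    have hTh : ∀ (h : H) u, A (ρ h u) = ρ h (A u) ∧ b (ρ h u) = r (s * h * s) (b u) := by
      intro h u
      have h1 : T (ρU h (u, 0)) = ρU h (T (u, 0)) := LinearMap.congr_fun (hT h).eq (u, 0)
      rw [hTu, hρU_in _ h.2, hρU_in _ h.2, map_zero, hTu, r_in] at h1
      exact Prod.mk.inj h1
    obtain ⟨a, ha⟩ := hS A (fun h => LinearMap.ext fun u => (hTh h u).1)
    refine ⟨a, b, ?_, fun h => LinearMap.ext fun u => (hTh h u).2⟩
    intro u v
    have : ((u, v) : V × V) = (u, 0) + (0, v) := by simp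
    rw [this, map_add, hTu, hTv, ha]
    simp
  have hcomm2 : ∀ T : Module.End ℂ (V × V), (∀ g, Commute T (ρU g)) →
      ∀ T' : Module.End ℂ (V × V), (∀ g, Commute T' (ρU g)) → Commute T T' := by
    intro T hT T' hT'
    obtain ⟨a, b, h1, h2⟩ := hcomm T hT
    obtain ⟨a', b', h1', h2'⟩ := hcomm T' hT'
    have hbb : ∀ u, b (b' u) = b' (b u) := by
      intro u
      by_cases hb : b = 0
      · simp [hb]
      · obtain ⟨_, d, hd⟩ := hS.proportional rfl (fun h => r (s * h * s)) b b' h2 h2' hb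
        simp [hd]
    apply LinearMap.ext
    rintro ⟨u, v⟩
    simp only [Module.End.mul_apply, h1, h1', map_add, map_smul, smul_add, hbb, smul_comm a a']
    apply Prod.ext
    · simp only
      abel
    · simp only
      abel
  have hn : 0 < n := by
    rcases Nat.eq_zero_or_pos n with rfl | h
    · exact absurd (by rw [Subsingleton.elim s 1]; exact H.one_mem) hsH
    · exact h
  have hadj : ∀ Q : (V × V) →ₗ[ℂ] (V × V) →ₗ[ℂ] ℂ, (∀ g u v, Q (ρU g u) (ρU g v) = Q u v) →
      ∀ T : Module.End ℂ (V × V), (∀ g, Commute T (ρU g)) → ∀ u v, Q (T u) v = Q u (T v) := by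
    intro Q hQ T hT
    obtain ⟨co, hco⟩ := mem_span_of_doubleCommutant ρU T (hcomm2 T hT)
    refine selfAdjoint_of_conj_inv (MonoidHom.id _) ?_ ρU Q hQ co T hco hT
    intro g
    obtain ⟨k, _, hk⟩ := exists_conj_inv_fix g ⟨0, hn⟩
    exact ⟨k, hk⟩
  have hBr : ∀ x, x ∈ H → ∀ u v, B (r x u) (r (t * x * t) v) = B u v := by
    intro x hx u v
    have := hB ⟨x, hx⟩ u v
    rw [← r_in, ← r_in, hσ] at this
    exact this
  rcases ht with rfl | rfl
  · let Q : (V × V) →ₗ[ℂ] (V × V) →ₗ[ℂ] ℂ :=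
      B.compl₁₂ (LinearMap.fst ℂ V V) (LinearMap.fst ℂ V V) +
      B.compl₁₂ (LinearMap.snd ℂ V V) (LinearMap.snd ℂ V V)
    have hQd : ∀ u v u' v', Q (u, v) (u', v') = B u u' + B v v' := fun u v u' v' => rfl
    have hQ : ∀ g u v, Q (ρU g u) (ρU g v) = Q u v := by
      rintro g ⟨u, v⟩ ⟨u', v'⟩
      simp only [one_mul, mul_one] at hBr
      by_cases hg : g ∈ H
      · rw [hρU_in g hg, hρU_in g hg, hQd, hQd, hBr _ hg, hBr _ (hsxs g hg)]
      · rw [hρU_out g hg, hρU_out g hg, hQd, hQd, hBr _ (hxs' g hg), hBr _ (hsx' g hg), add_comm]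
    refine perm_flip_const_aux n _ (Fin n) (by simp) (V × V) le_rfl ρU Q c hQ ?_ ?_ (hadj Q hQ)
    · rintro ⟨u, v⟩ h
      have h1 : u = 0 := hnd u fun w => by simpa [hQd] using h (w, 0)
      have h2 : v = 0 := hnd v fun w => by simpa [hQd] using h (0, w)
      rw [h1, h2]; rfl
    · rintro ⟨u, v⟩ ⟨u', v'⟩
      rw [hQd, hQd, hcB u, hcB v, mul_add]
  · let Q : (V × V) →ₗ[ℂ] (V × V) →ₗ[ℂ] ℂ :=
      B.compl₁₂ (LinearMap.fst ℂ V V) (LinearMap.snd ℂ V V) +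
      B.compl₁₂ (LinearMap.snd ℂ V V) (LinearMap.fst ℂ V V)
    have hQd : ∀ u v u' v', Q (u, v) (u', v') = B u v' + B v u' := fun u v u' v' => rfl
    have hQ : ∀ g u v, Q (ρU g u) (ρU g v) = Q u v := by
      rintro g ⟨u, v⟩ ⟨u', v'⟩
      by_cases hg : g ∈ H
      · have h1 := hBr _ (hsxs g hg) v u'
        have h2 : t * (t * g * t) * t = g := by
          calc t * (t * g * t) * t = (t * t) * g * (t * t) := by group
            _ = g := by rw [htt]; simp
        rw [h2] at h1
        rw [hρU_in g hg, hρU_in g hg, hQd, hQd, hBr _ hg, h1]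
      · have h1 := hBr _ (hsx' g hg) u v'
        have h2 := hBr _ (hxs' g hg) v u'
        have h3 : t * (t * g) * t = g * t := by
          rw [← mul_assoc, htt, one_mul]
        have h4 : t * (g * t) * t = t * g := by
          rw [mul_assoc, mul_assoc, htt, mul_one]
        rw [h3] at h1
        rw [h4] at h2
        rw [hρU_out g hg, hρU_out g hg, hQd, hQd, h1, h2, add_comm]
    refine perm_flip_const_aux n _ (Fin n) (by simp) (V × V) le_rfl ρU Q c hQ ?_ ?_ (hadj Q hQ)
    · rintro ⟨u, v⟩ h
      have h1 : u = 0 := hnd u fun w => by simpa [hQd] using h (0, w)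
      have h2 : v = 0 := hnd v fun w => by simpa [hQd] using h (w, 0)
      rw [h1, h2]; rfl
    · rintro ⟨u, v⟩ ⟨u', v'⟩
      rw [hQd, hQd, hcB u, hcB v, mul_add, add_comm]

lemma scalarComm_of_simple {K : Type} [Group K] (V : FDRep ℂ K) [Simple V] : ScalarComm V.ρ := by
  intro T hT
  let f : V ⟶ V := ⟨InducedCategory.homMk (ModuleCat.ofHom T), fun g => by
    apply InducedCategory.hom_ext
    apply ModuleCat.hom_ext
    exact (hT g).eq⟩
  have h1 := finrank_endomorphism_simple_eq_one ℂ V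
  obtain ⟨c, hc⟩ := (finrank_eq_one_iff_of_nonzero' (𝟙 V) (id_nonzero V)).mp h1 f
  refine ⟨c, ?_⟩
  have h2 := congrArg (fun k : V ⟶ V => k.hom.hom.hom) hc
  exact h2.symm

lemma alt_indicator (n : ℕ) (H : Subgroup (Equiv.Perm (Fin n)))
    (hH : ∀ x, x ∈ H ↔ Equiv.Perm.sign x = 1) (g : Equiv.Perm (Fin n))
    {V : Type*} [AddCommGroup V] [Module ℂ V]
    [FiniteDimensional ℂ V] (ρ : H →* Module.End ℂ V) (hS : ScalarComm ρ)
    (r : Equiv.Perm (Fin n) → ℂ) (hr : ∀ h : H, r h = LinearMap.trace ℂ V (ρ h)) :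
    (Nat.card H : ℂ)⁻¹ * ∑ x : H, r ((g * x) ^ 2) = 0 ∨
    (Nat.card H : ℂ)⁻¹ * ∑ x : H, r ((g * x) ^ 2) = 1 := by
  classical
  have hex : ∃ t : Equiv.Perm (Fin n), t * t = 1 ∧ Equiv.Perm.sign t = Equiv.Perm.sign g ∧
      ∀ σ : H →* H, (∀ h : H, (σ h : Equiv.Perm (Fin n)) = t * h * t) →
      ∀ B : V →ₗ[ℂ] V →ₗ[ℂ] ℂ, (∀ h u v, B (ρ h u) (ρ (σ h) v) = B u v) →
      ∀ u v, B u v = B v u := by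
    by_cases hs : ∃ s : Equiv.Perm (Fin n), s * s = 1 ∧ Equiv.Perm.sign s = -1
    · obtain ⟨s, hss, hs⟩ := hs
      rcases Int.units_eq_one_or (Equiv.Perm.sign g) with hg | hg
      · exact ⟨1, by simp, by simp [hg], fun σ hσ B hB =>
          alt_form_symm n H hH s 1 hss hs (Or.inl rfl) ρ hS σ hσ B hB⟩
      · exact ⟨s, hss, by rw [hs, hg], fun σ hσ B hB =>
          alt_form_symm n H hH s s hss hs (Or.inr rfl) ρ hS σ hσ B hB⟩
    · have hsub : Subsingleton (Fin n) := by
        by_contra h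
        rw [not_subsingleton_iff_nontrivial] at h
        obtain ⟨a, b, hab⟩ := h
        exact hs ⟨Equiv.swap a b, Equiv.swap_mul_self a b, Equiv.Perm.sign_swap hab⟩
      have h1 : ∀ x : Equiv.Perm (Fin n), x = 1 := fun x => Equiv.ext fun i => Subsingleton.elim _ _
      refine ⟨1, by simp, by rw [h1 g], ?_⟩
      intro σ _ B _ u v
      have hall : ∀ T : Module.End ℂ V, ∃ c : ℂ, T = c • 1 := by
        intro T
        apply hS
        intro h
        have : h = 1 := Subtype.ext (h1 _)
        rw [this, map_one]
        exact Commute.one_right T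
      by_cases hu : u = 0
      · simp [hu]
      obtain ⟨f, hf⟩ : ∃ f : Module.Dual ℂ V, f u = 1 := Module.Projective.exists_dual_eq_one ℂ hu
      obtain ⟨c, hc⟩ := hall (f.smulRight v)
      have h2 := LinearMap.congr_fun hc u
      simp [hf] at h2
      rw [h2]
      simp
  obtain ⟨t, htt, htg, hsym⟩ := hex
  have hconj : ∀ h : H, t * h * t ∈ H := by
    intro h
    rw [hH, Equiv.Perm.sign_mul, Equiv.Perm.sign_mul, (hH h).mp h.2, mul_one]
    exact Int.units_mul_self _
  let σ : H →* H :=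
    { toFun := fun h => ⟨t * h * t, hconj h⟩
      map_one' := by
        apply Subtype.ext
        simp [htt]
      map_mul' := by
        intro x y
        apply Subtype.ext
        change t * (x * y) * t = (t * x * t) * (t * y * t)
        calc t * (x * y) * t = t * x * 1 * y * t := by group
          _ = t * x * (t * t) * y * t := by rw [htt]
          _ = _ := by group }
  have hmain := twisted_indicator ρ hS σ (hsym σ fun h => rfl)
  have hgt : g⁻¹ * t ∈ H := by
    rw [hH, Equiv.Perm.sign_mul, htg, Equiv.Perm.sign_inv]
    exact Int.units_mul_self _
  have hsum : ∑ x : H, r ((g * x) ^ 2) = ∑ h : H, LinearMap.trace ℂ V (ρ h * ρ (σ h)) := by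
    symm
    refine Fintype.sum_bijective (fun h : H => ⟨g⁻¹ * t, hgt⟩ * h)
      (Group.mulLeft_bijective _) _ _ ?_
    intro h
    have : (g * (((⟨g⁻¹ * t, hgt⟩ : H) * h : H) : Equiv.Perm (Fin n))) ^ 2
        = ((σ h * h : H) : Equiv.Perm (Fin n)) := by
      change (g * ((g⁻¹ * t) * h)) ^ 2 = (t * h * t) * h
      rw [pow_two]
      group
    rw [this, hr, MonoidHom.map_mul, LinearMap.trace_mul_comm]
  rw [Nat.card_eq_fintype_card, hsum]
  exact hmain

end FSHelpers

/-- All simple objects of `C(S_n, A_n)` have Frobenius–Schur indicator `0` or `1`: for every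
`g ∈ S_n` and every irreducible complex character `χ` of `S(g) = A_n ∩ gA_ng⁻¹`,
`ν₂(g,χ) ∈ {0,1}`. -/
theorem stmt_14 (n : ℕ) (g : Equiv.Perm (Fin n)) :
    ∀ (V : FDRep ℂ ↥(stabCoset (alternatingGroup (Fin n)) g)), Simple V →
      nuInd (alternatingGroup (Fin n)) g 2 V.character = 0 ∨
      nuInd (alternatingGroup (Fin n)) g 2 V.character = 1 := by
  intro V hV
  classical
  have hH : ∀ x, x ∈ (stabCoset (alternatingGroup (Fin n)) g) ↔ Equiv.Perm.sign x = 1 := by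
    intro x
    rw [stabCoset, Subgroup.mem_inf, Equiv.Perm.mem_alternatingGroup]
    refine ⟨fun h => h.1, fun h => ⟨h, ?_⟩⟩
    refine ⟨g⁻¹ * x * g, ?_, ?_⟩
    · change g⁻¹ * x * g ∈ alternatingGroup (Fin n)
      rw [Equiv.Perm.mem_alternatingGroup]
      simp [h]
    · simp [mul_assoc]
  have hAH : ∀ x, x ∈ (alternatingGroup (Fin n)) ↔ x ∈ (stabCoset (alternatingGroup (Fin n)) g) := by
    intro x
    rw [hH, Equiv.Perm.mem_alternatingGroup]
  have hsq : ∀ x, (g * x) ^ 2 ∈ (stabCoset (alternatingGroup (Fin n)) g) ∨ x ∉ (stabCoset (alternatingGroup (Fin n)) g) := by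
    intro x
    by_cases hx : x ∈ (stabCoset (alternatingGroup (Fin n)) g)
    · left
      rw [hH, map_pow]
      exact Int.units_sq _
    · exact Or.inr hx
  let r : Equiv.Perm (Fin n) → ℂ := fun x => if h : x ∈ (stabCoset (alternatingGroup (Fin n)) g) then V.character ⟨x, h⟩ else 0
  have hr : ∀ h : (stabCoset (alternatingGroup (Fin n)) g), r h = LinearMap.trace ℂ V (V.ρ h) := by
    intro h
    simp only [r, h.2, dif_pos]
    rfl
  have hnu : nuInd (alternatingGroup (Fin n)) g 2 V.character =
      (starRingEnd ℂ) ((Nat.card (stabCoset (alternatingGroup (Fin n)) g) : ℂ)⁻¹ * ∑ x : (stabCoset (alternatingGroup (Fin n)) g), r ((g * x) ^ 2)) := by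
    rw [map_mul, map_inv₀, map_natCast, map_sum, nuInd, finsum_eq_sum_of_fintype]
    congr 1
    rw [← Finset.sum_subtype (Finset.univ.filter (fun x => x ∈ (stabCoset (alternatingGroup (Fin n)) g))) (by simp)
      (fun x => (starRingEnd ℂ) (r ((g * x) ^ 2))), Finset.sum_filter]
    refine Finset.sum_congr rfl fun x _ => ?_
    by_cases hx : x ∈ (stabCoset (alternatingGroup (Fin n)) g)
    · have h1 : (g * x) ^ 2 ∈ (stabCoset (alternatingGroup (Fin n)) g) := (hsq x).resolve_right (by simp [hx])
      rw [dif_pos ⟨(hAH x).mpr hx, h1⟩, if_pos hx]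
      simp only [r, h1, dif_pos]
    · rw [dif_neg (fun h => hx ((hAH x).mp h.1)), if_neg hx]
  haveI := hV
  have hS : ScalarComm V.ρ := scalarComm_of_simple V
  rcases alt_indicator n (stabCoset (alternatingGroup (Fin n)) g) hH g V.ρ hS r hr with h | h
  · left
    rw [hnu, h, map_zero]
  · right
    rw [hnu, h, map_one]
end

section
/- Let ℓ < n and let A_ℓ ≤ S_n be the alternating group on {1,…,ℓ}, embedded in S_n as the even permutations fixing each of ℓ+1,…,n. Then for every g ∈ S_n and every irreducible complex character χ of S(g) = A_ℓ ∩ g A_ℓ g⁻¹, the indicator ν₂(g,χ) equals 0 or 1. (Equivalently: all simple objects of C(S_n, A_ℓ) have Frobenius–Schur indicator 0 or 1.) -/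
open scoped BigOperators Pointwise Classical
open CategoryTheory

structure IrrRep {G V : Type*} [Group G] [AddCommGroup V] [Module ℂ V]
    (ρ : Representation ℂ G V) : Prop where
  nontriv : Nontrivial V
  sub : ∀ W : Submodule ℂ V, (∀ g, ∀ w ∈ W, ρ g w ∈ W) → W = ⊥ ∨ W = ⊤

/-- Averaged projection onto an invariant subspace. -/
theorem exists_equiv_proj {G V : Type*} [Group G] [Fintype G] [AddCommGroup V] [Module ℂ V]
    (ρ : Representation ℂ G V) (W : Submodule ℂ V) (hW : ∀ g, ∀ w ∈ W, ρ g w ∈ W) :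
    ∃ P : V →ₗ[ℂ] V, (∀ g, P * ρ g = ρ g * P) ∧ (∀ v, P v ∈ W) ∧ ∀ w ∈ W, P w = w := by
  obtain ⟨f, hf⟩ := LinearMap.exists_leftInverse_of_injective W.subtype (Submodule.ker_subtype W)
  let π : V →ₗ[ℂ] V := W.subtype ∘ₗ f
  have hπ1 : ∀ v, π v ∈ W := fun v => (f v).2
  have hπ2 : ∀ w ∈ W, π w = w := fun w hw => by
    have := LinearMap.congr_fun hf ⟨w, hw⟩
    simp only [LinearMap.comp_apply, Submodule.subtype_apply, LinearMap.id_apply] at this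
    simp [π, this]
  have hc : (Fintype.card G : ℂ) ≠ 0 := by simp
  refine ⟨(Fintype.card G : ℂ)⁻¹ • ∑ h : G, ρ h * π * ρ h⁻¹, fun g => ?_, fun v => ?_, fun w hw => ?_⟩
  · rw [smul_mul_assoc, mul_smul_comm, Finset.sum_mul, Finset.mul_sum]
    congr 1
    refine Fintype.sum_equiv (Equiv.mulLeft g⁻¹) _ _ fun h => ?_
    simp only [Equiv.coe_mulLeft, mul_inv_rev, inv_inv, map_mul]
    have : ρ g * ρ g⁻¹ = 1 := by rw [← map_mul]; simp
    simp only [← mul_assoc, this, one_mul]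
  · simp only [LinearMap.smul_apply, LinearMap.sum_apply, Module.End.mul_apply]
    exact W.smul_mem _ (W.sum_mem fun h _ => hW _ _ (hπ1 _))
  · simp only [LinearMap.smul_apply, LinearMap.sum_apply, Module.End.mul_apply]
    have : ∀ h : G, ρ h (π (ρ h⁻¹ w)) = w := fun h => by
      rw [hπ2 _ (hW _ _ hw), ← Module.End.mul_apply, ← map_mul]; simp
    simp [this, hc, smul_smul, ← Nat.cast_smul_eq_nsmul ℂ]

theorem IrrRep.isIrreducible {G V : Type*} [Group G] [AddCommGroup V] [Module ℂ V]
    {ρ : Representation ℂ G V} (h : IrrRep ρ) : ρ.IsIrreducible := by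
  have := h.nontriv
  refine { exists_pair_ne := ⟨⊥, ⊤, fun e => ?_⟩, eq_bot_or_eq_top := fun W => ?_ }
  · have := congrArg Subrepresentation.toSubmodule e
    exact bot_ne_top this
  · rcases h.sub W.toSubmodule (fun g w hw => W.apply_mem_toSubmodule g hw) with h | h
    · left; exact Subrepresentation.toSubmodule_injective h
    · right; exact Subrepresentation.toSubmodule_injective h

theorem IrrRep.schur {G V : Type*} [Group G] [AddCommGroup V] [Module ℂ V] [FiniteDimensional ℂ V]
    {ρ : Representation ℂ G V} (h : IrrRep ρ) (T : V →ₗ[ℂ] V) (hT : ∀ g, T * ρ g = ρ g * T) :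
    ∃ c : ℂ, T = c • 1 := by
  have := h.nontriv
  obtain ⟨c, hc⟩ := Module.End.exists_eigenvalue T
  refine ⟨c, ?_⟩
  have hinv : ∀ g, ∀ w ∈ Module.End.eigenspace T c, ρ g w ∈ Module.End.eigenspace T c := by
    intro g w hw
    rw [Module.End.mem_eigenspace_iff] at hw ⊢
    rw [← Module.End.mul_apply, hT, Module.End.mul_apply, hw, map_smul]
  rcases h.sub (Module.End.eigenspace T c) hinv with h | h
  · exact absurd h hc
  · ext v
    have : v ∈ Module.End.eigenspace T c := h ▸ Submodule.mem_top
    simpa using Module.End.mem_eigenspace_iff.1 this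

theorem IrrRep.of_schur {G V : Type*} [Group G] [Fintype G] [AddCommGroup V] [Module ℂ V]
    [Nontrivial V]
    {ρ : Representation ℂ G V} (h : ∀ T : V →ₗ[ℂ] V, (∀ g, T * ρ g = ρ g * T) → ∃ c : ℂ, T = c • 1) :
    IrrRep ρ := by
  refine ⟨inferInstance, fun W hW => ?_⟩
  obtain ⟨P, h1, h2, h3⟩ := exists_equiv_proj ρ W hW
  obtain ⟨c, rfl⟩ := h P h1
  by_cases hc : c = 0
  · left
    rw [eq_bot_iff]
    intro w hw
    have := h3 w hw
    simp only [hc, zero_smul, LinearMap.zero_apply] at this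
    simp [← this]
  · right
    rw [eq_top_iff]
    intro v _
    have := W.smul_mem c⁻¹ (h2 v)
    simpa [smul_smul, hc] using this

theorem IrrRep.burnside {G V : Type*} [Group G] [Fintype G] [AddCommGroup V] [Module ℂ V]
    [FiniteDimensional ℂ V]
    {ρ : Representation ℂ G V} (h : IrrRep ρ) (T : V →ₗ[ℂ] V) :
    ∃ c : G → ℂ, T = ∑ g, c g • ρ g := by
  have hirr := h.isIrreducible
  have hs : IsSimpleModule (MonoidAlgebra ℂ G) ρ.asModule := inferInstance
  let b := Module.finBasis ℂ V
  let T' : ρ.asModule →ₗ[ℂ] ρ.asModule := ρ.asModuleEquiv.symm.toLinearMap ∘ₗ T ∘ₗ ρ.asModuleEquiv.toLinearMap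
  let f : Module.End (Module.End (MonoidAlgebra ℂ G) ρ.asModule) ρ.asModule :=
    { toFun := T'
      map_add' := map_add T'
      map_smul' := by
        intro e m
        obtain ⟨c, rfl⟩ := (IsSimpleModule.algebraMap_end_bijective_of_isAlgClosed (A := MonoidAlgebra ℂ G)
          (V := ρ.asModule) ℂ).2 e
        simp }
  obtain ⟨r, hr⟩ := jacobson_density f (Finset.univ.image fun i => ρ.asModuleEquiv.symm (b i))
  refine ⟨fun g => r.coeff g, b.ext fun i => ?_⟩
  have := congrArg ρ.asModuleEquiv (hr (ρ.asModuleEquiv.symm (b i)) (by simp))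
  rw [Representation.asModuleEquiv_map_smul] at this
  simp only [LinearEquiv.apply_symm_apply] at this
  have h2 : ρ.asModuleEquiv (f (ρ.asModuleEquiv.symm (b i))) = T (b i) := by
    simp [f, T']
  rw [← h2, this]
  simp [Representation.asAlgebraHom_def, MonoidAlgebra.lift_apply, Finsupp.sum_fintype]

theorem exists_irr_sub {G V : Type*} [Group G] [AddCommGroup V] [Module ℂ V]
    [FiniteDimensional ℂ V] [Nontrivial V] (ρ : Representation ℂ G V) :
    ∃ W : Subrepresentation ρ, IrrRep W.toRepresentation := by
  obtain ⟨W, ⟨hW, hW0⟩, hmin⟩ := (wellFounded_lt (α := Submodule ℂ V)).has_min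
    {W | (∀ g, ∀ w ∈ W, ρ g w ∈ W) ∧ W ≠ ⊥} ⟨⊤, by simp, top_ne_bot⟩
  refine ⟨⟨W, fun g v hv => hW g v hv⟩, (Submodule.nontrivial_iff_ne_bot).2 hW0, fun U hU => ?_⟩
  by_cases h0 : U = ⊥
  · exact Or.inl h0
  right
  by_contra h1
  refine hmin (U.map W.subtype) ⟨?_, ?_⟩ ?_
  · rintro g w ⟨u, hu, rfl⟩
    exact ⟨_, hU g u hu, rfl⟩
  · intro h; apply h0; exact Submodule.map_injective_of_injective W.injective_subtype (by rw [Submodule.map_bot]; exact h)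
  · refine lt_of_le_of_ne (Submodule.map_subtype_le _ _) fun h => h1 ?_
    rw [eq_top_iff]
    rintro ⟨x, hx⟩ -
    have : x ∈ U.map W.subtype := by rw [h]; exact hx
    obtain ⟨u, hu, rfl⟩ := this
    exact hu

theorem exists_conj_inv {α : Type*} (g : Equiv.Perm α) (a : α) :
    ∃ h : Equiv.Perm α, h a = a ∧ h * g * h⁻¹ = g⁻¹ := by
  classical
  let r0 : α → α := fun x => Quotient.out (s := Equiv.Perm.SameCycle.setoid g) (Quotient.mk _ x)
  let r : α → α := fun x => if g.SameCycle x a then a else r0 x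
  have hr0 : ∀ x, g.SameCycle (r0 x) x := fun x => Quotient.exact (s := Equiv.Perm.SameCycle.setoid g) (Quotient.out_eq _)
  have hr : ∀ x, g.SameCycle (r x) x := fun x => by
    by_cases h : g.SameCycle x a
    · simp only [r, h, if_true]; exact h.symm
    · simp only [r, h, if_false]; exact hr0 x
  have hrr : ∀ x y, g.SameCycle x y → r x = r y := fun x y h => by
    have h1 : g.SameCycle x a ↔ g.SameCycle y a := ⟨fun t => h.symm.trans t, fun t => h.trans t⟩
    have h2 : r0 x = r0 y := by
      simp only [r0]; congr 1; exact Quotient.sound h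
    simp only [r, h1, h2]
  choose i hi using hr
  have key : ∀ (x : α) (m n : ℤ), (g ^ m) x = (g ^ n) x → (g ^ (-m)) x = (g ^ (-n)) x := by
    intro x m n h
    have : (g ^ (-m - n)) ((g ^ m) x) = (g ^ (-m - n)) ((g ^ n) x) := by rw [h]
    rw [← Equiv.Perm.mul_apply, ← zpow_add, ← Equiv.Perm.mul_apply, ← zpow_add] at this
    convert! this.symm using 3 <;> ring
  let h : α → α := fun x => (g ^ (- i x)) (r x)
  have hs : ∀ x, g.SameCycle x (h x) := fun x => by
    refine ⟨- i x - i x, ?_⟩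
    have : (g ^ (- i x - i x)) ((g ^ i x) (r x)) = h x := by
      rw [← Equiv.Perm.mul_apply, ← zpow_add, sub_add_cancel]
    rwa [hi] at this
  have hspec : ∀ x (m : ℤ), (g ^ m) (r x) = x → h x = (g ^ (-m)) (r x) := fun x m hm =>
    key _ _ _ (by rw [hi, hm])
  have hinv : ∀ x, h (h x) = x := fun x => by
    have e := hrr _ _ (hs x)
    rw [hspec (h x) (- i x) (by rw [← e]), ← e, neg_neg, hi]
  refine ⟨⟨h, h, hinv, hinv⟩, ?_, ?_⟩
  · change h a = a
    have : r a = a := by simp [r, Equiv.Perm.SameCycle.refl]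
    have := hspec a 0 (by simpa using this)
    simp [this]; assumption
  · rw [mul_inv_eq_iff_eq_mul]
    ext x
    change h (g x) = g⁻¹ (h x)
    have e : r x = r (g x) := hrr _ _ ⟨1, by simp⟩
    rw [hspec (g x) (1 + i x) (by rw [← e, zpow_add, Equiv.Perm.mul_apply, hi]; simp), ← e]
    rw [neg_add, zpow_add, Equiv.Perm.mul_apply]
    simp [h]


theorem exists_conj_inv_sub {α : Type*} (g : Equiv.Perm α) (a : α) :
    ∃ k : Equiv.Perm {x // x ≠ a}, Equiv.Perm.ofSubtype k * g * (Equiv.Perm.ofSubtype k)⁻¹ = g⁻¹ := by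
  obtain ⟨h, ha, hg⟩ := exists_conj_inv g a
  have h1 : ∀ x, h x ≠ a ↔ x ≠ a := fun x => by
    rw [not_iff_not]
    constructor
    · intro e; apply h.injective; rw [e, ha]
    · rintro rfl; exact ha
  refine ⟨h.subtypePerm h1, ?_⟩
  rw [Equiv.Perm.ofSubtype_subtypePerm]
  · exact hg
  · rintro x hx rfl
    exact hx ha

/-- Gelfand trick: endomorphisms commuting with a point stabilizer are selfadjoint for every
invariant form. -/
theorem selfadj_of_commute {α V : Type*} [Fintype α] [AddCommGroup V] [Module ℂ V]
    [FiniteDimensional ℂ V] {ρ : Representation ℂ (Equiv.Perm α) V} (h : IrrRep ρ)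
    (ω : V →ₗ[ℂ] V →ₗ[ℂ] ℂ) (hω : ∀ g u v, ω (ρ g u) (ρ g v) = ω u v) (a : α)
    (T : V →ₗ[ℂ] V)
    (hT : ∀ k : Equiv.Perm {x // x ≠ a},
      T * ρ (Equiv.Perm.ofSubtype k) = ρ (Equiv.Perm.ofSubtype k) * T) (u v : V) :
    ω (T u) v = ω u (T v) := by
  obtain ⟨c, hc⟩ := h.burnside T
  let ι : Equiv.Perm {x // x ≠ a} →* Equiv.Perm α := Equiv.Perm.ofSubtype
  let E : Equiv.Perm α → V →ₗ[ℂ] V := fun g => ∑ k, ρ (ι k * g * (ι k)⁻¹)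
  have hE1 : ∀ k g, E (ι k * g * (ι k)⁻¹) = E g := fun k g => by
    refine Fintype.sum_equiv (Equiv.mulRight k) _ _ fun l => ?_
    simp [mul_assoc]
  have hE2 : ∀ g, E g⁻¹ = E g := fun g => by
    obtain ⟨k, hk⟩ := exists_conj_inv_sub g a
    rw [← hE1 k g]
    exact congrArg E hk.symm
  have hadj : ∀ g u v, ω (ρ g u) v = ω u (ρ g⁻¹ v) := fun g u v => by
    rw [← hω g⁻¹ (ρ g u) v, ← Module.End.mul_apply, ← map_mul]; simp
  have hE3 : ∀ g u v, ω (E g u) v = ω u (E g v) := fun g u v => by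
    conv_rhs => rw [← hE2]
    simp only [E, LinearMap.sum_apply, map_sum, hadj]
    refine Finset.sum_congr rfl fun k _ => ?_
    simp [mul_assoc]
  let N : ℂ := Fintype.card (Equiv.Perm {x // x ≠ a})
  have hN : N ≠ 0 := by simp [N, Fintype.card_ne_zero]
  have hTE : N • T = ∑ g, c g • E g := by
    have h1 : ∀ k, ρ (ι k) * T * ρ (ι k)⁻¹ = T := fun k => by
      rw [← hT k, mul_assoc, ← map_mul]; simp [ι]
    calc N • T = ∑ k, ρ (ι k) * T * ρ (ι k)⁻¹ := by
          simp only [h1, Finset.sum_const, N, Finset.card_univ, Nat.cast_smul_eq_nsmul]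
      _ = ∑ k, ∑ g, c g • ρ (ι k * g * (ι k)⁻¹) := by
          refine Finset.sum_congr rfl fun k _ => ?_
          rw [hc, Finset.mul_sum, Finset.sum_mul]
          refine Finset.sum_congr rfl fun g _ => ?_
          rw [mul_smul_comm, smul_mul_assoc, map_mul, map_mul]
      _ = _ := by
          rw [Finset.sum_comm]
          simp only [E, Finset.smul_sum]
  have : ω ((N • T) u) v = ω u ((N • T) v) := by
    rw [hTE]
    simp [LinearMap.sum_apply, hE3]
  simpa [hN] using this

theorem perm_no_alt (n : ℕ) : ∀ (α : Type) [Fintype α], Fintype.card α = n →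
    ∀ (V : Type) [AddCommGroup V] [Module ℂ V] [FiniteDimensional ℂ V]
      (ρ : Representation ℂ (Equiv.Perm α) V), IrrRep ρ →
      ∀ ω : V →ₗ[ℂ] V →ₗ[ℂ] ℂ, (∀ g u v, ω (ρ g u) (ρ g v) = ω u v) →
      (∀ u v, ω u v = - ω v u) → ω = 0 := by
  induction n with
  | zero =>
    intro α _ hα V _ _ _ ρ hρ ω hω halt
    have := hρ.nontriv
    have := Fintype.card_eq_zero_iff.1 hα
    obtain ⟨v, hv⟩ := exists_ne (0 : V)
    have h1 : Submodule.span ℂ {v} = ⊤ := by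
      refine (hρ.sub _ fun g w hw => ?_).resolve_left (by simpa using hv)
      have : g = 1 := Subsingleton.elim _ _
      simpa [this] using hw
    have h2 : ω v v = 0 := self_eq_neg.1 (halt v v)
    ext x y
    obtain ⟨p, rfl⟩ := Submodule.mem_span_singleton.1 (h1 ▸ Submodule.mem_top : x ∈ Submodule.span ℂ {v})
    obtain ⟨q, rfl⟩ := Submodule.mem_span_singleton.1 (h1 ▸ Submodule.mem_top : y ∈ Submodule.span ℂ {v})
    simp [h2]
  | succ n ih =>
    intro α _ hα V _ _ _ ρ hρ ω hω halt
    have := hρ.nontriv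
    have : Nonempty α := Fintype.card_pos_iff.1 (by omega)
    obtain ⟨a⟩ := this
    let σ : Representation ℂ (Equiv.Perm {x // x ≠ a}) V := ρ.comp Equiv.Perm.ofSubtype
    obtain ⟨W, hW⟩ := exists_irr_sub σ
    have hcard : Fintype.card {x // x ≠ a} = n := by
      rw [Fintype.card_subtype_compl, Fintype.card_subtype_eq, hα]; rfl
    have hω0 : ω.domRestrict₁₂ W.toSubmodule W.toSubmodule = 0 :=
      ih {x // x ≠ a} hcard W.toSubmodule W.toRepresentation hW _
        (fun g u v => hω _ _ _) (fun u v => halt _ _)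
    obtain ⟨P, hP1, hP2, hP3⟩ := exists_equiv_proj σ W.toSubmodule
      (fun g w hw => W.apply_mem_toSubmodule g hw)
    have hsa := selfadj_of_commute hρ ω hω a P hP1
    have hW0 : ∀ w ∈ W.toSubmodule, ω w = 0 := fun w hw => by
      ext v
      rw [← hP3 w hw, hsa, ]
      exact LinearMap.congr_fun₂ hω0 ⟨w, hw⟩ ⟨P v, hP2 v⟩
    have hker := hρ.sub (LinearMap.ker ω) (fun g w hw => by
      rw [LinearMap.mem_ker] at hw ⊢
      ext v
      have := hω g w (ρ g⁻¹ v)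
      rw [← Module.End.mul_apply, ← map_mul] at this
      simpa [hw] using this)
    have := hW.nontriv
    obtain ⟨⟨w, hw⟩, hw0⟩ := exists_ne (0 : W.toSubmodule)
    rcases hker with h | h
    · exfalso
      apply hw0
      have : w ∈ LinearMap.ker ω := hW0 w hw
      rw [h] at this
      exact Subtype.ext this
    · exact LinearMap.ker_eq_top.1 h


/-- `ω` is invariant twisted by `τ`. -/
def TwInv {G V : Type*} [Group G] [AddCommGroup V] [Module ℂ V]
    (ρ : Representation ℂ G V) (τ : G →* G) (ω : V →ₗ[ℂ] V →ₗ[ℂ] ℂ) : Prop :=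
  ∀ g u v, ω (ρ (τ g) u) (ρ g v) = ω u v

/-- twisted Frobenius-Schur indicator. -/
noncomputable def twInd {G V : Type*} [Group G] [Fintype G] [AddCommGroup V] [Module ℂ V]
    (ρ : Representation ℂ G V) (τ : G →* G) : ℂ :=
  (Fintype.card G : ℂ)⁻¹ * ∑ g, LinearMap.trace ℂ V (ρ (τ g * g))

theorem TwInv.unique {G V : Type*} [Group G] [AddCommGroup V] [Module ℂ V]
    [FiniteDimensional ℂ V]
    {ρ : Representation ℂ G V} (h : IrrRep ρ) {τ : G →* G} (hτ : ∀ g, τ (τ g) = g)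
    {ω ω' : V →ₗ[ℂ] V →ₗ[ℂ] ℂ} (hω : TwInv ρ τ ω) (hω' : TwInv ρ τ ω') (h0 : ω ≠ 0) :
    ∃ c : ℂ, ω' = c • ω := by
  have e : ∀ g v, ρ g (ρ g⁻¹ v) = v := fun g v => by
    rw [← Module.End.mul_apply, ← map_mul]; simp
  have eq1 : ∀ (η : V →ₗ[ℂ] V →ₗ[ℂ] ℂ), TwInv ρ τ η → ∀ g u, η (ρ (τ g) u) = η u ∘ₗ ρ g⁻¹ := by
    intro η hη g u
    ext v
    have := hη g u (ρ g⁻¹ v)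
    rw [e] at this
    simpa using this
  have hker : LinearMap.ker ω = ⊥ := by
    refine (h.sub (LinearMap.ker ω) fun g w hw => ?_).resolve_right
      fun ht => h0 (LinearMap.ker_eq_top.1 ht)
    rw [LinearMap.mem_ker] at hw ⊢
    rw [← hτ g, eq1 ω hω, hw, LinearMap.zero_comp]
  have hinj : Function.Injective ω := LinearMap.ker_eq_bot.1 hker
  let E := LinearMap.linearEquivOfInjective (V₂ := Module.Dual ℂ V) ω hinj Subspace.dual_finrank_eq.symm
  have hE : ∀ f, ω (E.symm f) = f := fun f => E.apply_symm_apply f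
  obtain ⟨c, hc⟩ := h.schur (E.symm.toLinearMap ∘ₗ ω') (fun g => by
    ext u
    apply hinj
    obtain ⟨k, rfl⟩ : ∃ k, τ k = g := ⟨_, hτ g⟩
    simp only [Module.End.mul_apply, LinearMap.comp_apply, LinearEquiv.coe_coe]
    rw [eq1 ω hω, hE, hE, eq1 ω' hω'])
  refine ⟨c, ?_⟩
  ext u v
  have := congrArg ω (LinearMap.congr_fun hc u)
  simp only [LinearMap.comp_apply, LinearEquiv.coe_coe, hE] at this
  rw [this]
  simp

theorem fs_trichotomy {G V : Type*} [Group G] [Fintype G] [AddCommGroup V] [Module ℂ V]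
    [FiniteDimensional ℂ V]
    {ρ : Representation ℂ G V} (h : IrrRep ρ) (τ : G →* G) (hτ : ∀ g, τ (τ g) = g) :
    (twInd ρ τ = 0 ∧ ∀ ω, TwInv ρ τ ω → ω = 0) ∨
    ∃ ω, TwInv ρ τ ω ∧ ω ≠ 0 ∧ ∃ ε : ℂ, (ε = 1 ∨ ε = -1) ∧ (∀ u v, ω u v = ε * ω v u) ∧
      twInd ρ τ = ε := by
  let b := Module.finBasis ℂ V
  let N : ℂ := Fintype.card G
  have hN : N ≠ 0 := by simp [N, Fintype.card_ne_zero]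
  let P : (V →ₗ[ℂ] V →ₗ[ℂ] ℂ) → (V →ₗ[ℂ] V →ₗ[ℂ] ℂ) := fun ω =>
    N⁻¹ • ∑ g, ω.compl₁₂ (ρ (τ g)) (ρ g)
  have hP : ∀ ω u v, P ω u v = N⁻¹ * ∑ g, ω (ρ (τ g) u) (ρ g v) := fun ω u v => by
    simp [P, LinearMap.sum_apply]
  have hPinv : ∀ ω, TwInv ρ τ (P ω) := fun ω k u v => by
    rw [hP, hP]
    congr 1
    refine Fintype.sum_equiv (Equiv.mulRight k) _ _ fun g => ?_
    simp
  let E : _ → _ → (V →ₗ[ℂ] V →ₗ[ℂ] ℂ) := fun i j => (LinearMap.mul ℂ ℂ).compl₁₂ (b.coord i) (b.coord j)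
  have hE : ∀ i j u v, E i j u v = b.coord i u * b.coord j v := fun i j u v => by simp [E]
  have hν : twInd ρ τ = ∑ i, ∑ j, P (E i j) (b j) (b i) := by
    simp only [hP, hE, twInd]
    simp only [← Finset.mul_sum]
    congr 1
    rw [Finset.sum_congr rfl fun i _ => Finset.sum_comm, Finset.sum_comm]
    refine Finset.sum_congr rfl fun g _ => ?_
    rw [map_mul, LinearMap.trace_eq_matrix_trace ℂ b, LinearMap.toMatrix_mul, Matrix.trace]
    simp [Matrix.mul_apply, LinearMap.toMatrix_apply]
  by_cases hex : ∃ ω, TwInv ρ τ ω ∧ ω ≠ 0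
  · right
    obtain ⟨ω, hω, h0⟩ := hex
    have hflip : TwInv ρ τ ω.flip := fun g u v => by
      have := hω (τ g) v u
      rwa [hτ] at this
    obtain ⟨ε, hε⟩ := hω.unique h hτ hflip h0
    have hε1 : ∀ u v, ω u v = ε * ω v u := fun u v => by
      have := LinearMap.congr_fun₂ hε v u
      simpa using this
    obtain ⟨u0, v0, huv⟩ : ∃ u v, ω u v ≠ 0 := by
      by_contra! hh
      exact h0 (by ext u v; simpa using hh u v)
    have hεε : ε = 1 ∨ ε = -1 := by
      have : ω u0 v0 = ε * (ε * ω u0 v0) := by rw [← hε1, ← hε1]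
      rw [← sq_eq_one_iff]
      rw [← mul_assoc] at this
      rw [sq]
      exact (mul_eq_right₀ huv).1 this.symm
    refine ⟨ω, hω, h0, ε, hεε, hε1, ?_⟩
    choose lam hlam using fun i j => hω.unique h hτ (hPinv (E i j)) h0
    have hexp : ∀ u v, ω u v = ∑ i, ∑ j, ω (b i) (b j) * E i j u v := fun u v => by
      conv_lhs => rw [← b.sum_repr u, ← b.sum_repr v]
      simp only [map_sum, map_smul, LinearMap.sum_apply, LinearMap.smul_apply, smul_eq_mul, hE,
        Finset.mul_sum, Module.Basis.coord_apply]
      rw [Finset.sum_comm]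
      refine Finset.sum_congr rfl fun i _ => Finset.sum_congr rfl fun j _ => by ring
    have h1 : ω u0 v0 = (∑ i, ∑ j, ω (b i) (b j) * lam i j) * ω u0 v0 := by
      have e1 : P ω u0 v0 = ω u0 v0 := by
        rw [hP]
        simp only [hω _ _ _, Finset.sum_const, Finset.card_univ, nsmul_eq_mul]
        rw [← mul_assoc, inv_mul_cancel₀ hN, one_mul]
      have e2 : P ω u0 v0 = ∑ i, ∑ j, ω (b i) (b j) * P (E i j) u0 v0 := by
        simp only [hP]
        rw [Finset.sum_congr rfl fun g _ => hexp _ _, Finset.sum_comm, Finset.mul_sum]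
        refine Finset.sum_congr rfl fun i _ => ?_
        rw [Finset.sum_comm, Finset.mul_sum]
        refine Finset.sum_congr rfl fun j _ => ?_
        rw [← Finset.mul_sum]; ring
      rw [← e1, e2]
      conv_lhs => simp only [hlam, LinearMap.smul_apply, smul_eq_mul, ← mul_assoc, ← Finset.sum_mul]
      rw [← e2, e1]
    have h2 : (∑ i, ∑ j, ω (b i) (b j) * lam i j) = 1 := (mul_eq_right₀ huv).1 h1.symm
    rw [hν]
    calc _ = ∑ i, ∑ j, ε * (ω (b i) (b j) * lam i j) := by
          refine Finset.sum_congr rfl fun i _ => Finset.sum_congr rfl fun j _ => ?_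
          rw [hlam, LinearMap.smul_apply, LinearMap.smul_apply, hε1 (b j) (b i), smul_eq_mul]; ring
      _ = ε := by simp only [← Finset.mul_sum, h2, mul_one]
  · left
    push Not at hex
    refine ⟨?_, hex⟩
    rw [hν]
    simp [hex _ (hPinv _)]

theorem perm_ind_one {α V : Type} [Fintype α] [AddCommGroup V] [Module ℂ V]
    [FiniteDimensional ℂ V] {ρ : Representation ℂ (Equiv.Perm α) V} (h : IrrRep ρ) :
    twInd ρ (MonoidHom.id _) = 1 := by
  have hirr := h.isIrreducible
  rcases fs_trichotomy h (MonoidHom.id _) (fun _ => rfl) with ⟨-, h0⟩ | ⟨ω, hω, h0, ε, hε | hε, hs, h1⟩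
  · exfalso
    have hchar : ∀ g, ρ.character g⁻¹ = ρ.character g := fun g => by
      have : IsConj g g⁻¹ := by
        rw [Equiv.Perm.isConj_iff_cycleType_eq, Equiv.Perm.cycleType_inv]
      obtain ⟨k, hk⟩ := isConj_iff.1 this
      rw [← hk, Representation.char_conj]
    have : Invertible (Nat.card (Equiv.Perm α) : ℂ) := invertibleOfNonzero (by simp [Nat.card_eq_fintype_card, Fintype.card_ne_zero])
    have e1 := Representation.card_inv_mul_sum_char_mul_char_eq_finrank ρ ρ.dual
    have e2 := Representation.card_inv_mul_sum_char_mul_char_eq_finrank ρ ρ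
    rw [Representation.IsIrreducible.finrank_intertwiningMap_self] at e2
    simp only [Representation.char_dual, hchar] at e1 e2
    rw [e1] at e2
    have e3 : 0 < Module.finrank ℂ (Representation.IntertwiningMap ρ ρ.dual) := by
      have : Module.finrank ℂ (Representation.IntertwiningMap ρ ρ.dual) = 1 := by exact_mod_cast e2
      omega
    have : Nontrivial (Representation.IntertwiningMap ρ ρ.dual) := Module.nontrivial_of_finrank_pos e3
    obtain ⟨f, hf⟩ := exists_ne (0 : Representation.IntertwiningMap ρ ρ.dual)
    apply hf
    have := h0 f.toLinearMap (fun g u v => by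
      have := LinearMap.congr_fun (Representation.IntertwiningMap.isIntertwining ρ ρ.dual f g u) (ρ g v)
      simp only [MonoidHom.id_apply]
      refine this.trans ?_
      change f u (ρ g⁻¹ (ρ g v)) = f u v
      rw [← Module.End.mul_apply, ← map_mul]
      simp)
    ext u v
    exact LinearMap.congr_fun₂ this u v
  · rw [h1, hε]
  · exfalso
    exact h0 (perm_no_alt _ α rfl V ρ h ω hω (fun u v => by rw [hs u v, hε]; ring))


/-- Every nonzero representation of a symmetric group has a positive integral indicator. -/
theorem perm_ind_pos {α : Type} [Fintype α] (n : ℕ) : ∀ (V : Type) [AddCommGroup V] [Module ℂ V]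
    [FiniteDimensional ℂ V] [Nontrivial V] (ρ : Representation ℂ (Equiv.Perm α) V),
    Module.finrank ℂ V = n → ∃ k : ℕ, 0 < k ∧ twInd ρ (MonoidHom.id _) = k := by
  induction n using Nat.strong_induction_on with
  | _ n ih =>
  intro V _ _ _ _ ρ hn
  by_cases hirr : IrrRep ρ
  · exact ⟨1, one_pos, by rw [perm_ind_one hirr]; simp⟩
  have : ∃ W : Submodule ℂ V, (∀ g, ∀ w ∈ W, ρ g w ∈ W) ∧ W ≠ ⊥ ∧ W ≠ ⊤ := by
    by_contra! hh
    exact hirr ⟨inferInstance, fun W hW => by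
      by_cases h0 : W = ⊥
      · exact Or.inl h0
      · exact Or.inr (hh W hW h0)⟩
  obtain ⟨W, hW, hW0, hW1⟩ := this
  obtain ⟨P, hP1, hP2, hP3⟩ := exists_equiv_proj ρ W hW
  have hP1' : ∀ g v, P (ρ g v) = ρ g (P v) := fun g v => LinearMap.congr_fun (hP1 g) v
  let U := LinearMap.ker P
  have hU : ∀ g, ∀ w ∈ U, ρ g w ∈ U := fun g w hw => by
    rw [LinearMap.mem_ker] at hw ⊢
    rw [hP1', hw, map_zero]
  have hc : IsCompl W U := by
    rw [isCompl_iff, Submodule.disjoint_def, codisjoint_iff, eq_top_iff]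
    refine ⟨fun x hx hx' => ?_, fun x _ => ?_⟩
    · rw [← hP3 x hx]; exact hx'
    · rw [← add_sub_cancel (P x) x]
      refine Submodule.add_mem_sup (hP2 x) ?_
      rw [LinearMap.mem_ker, map_sub, hP3 _ (hP2 x), sub_self]
  let W' : Subrepresentation ρ := ⟨W, fun g v hv => hW g v hv⟩
  let U' : Subrepresentation ρ := ⟨U, fun g v hv => hU g v hv⟩
  have hfin := Submodule.finrank_add_eq_of_isCompl hc
  have hWn : Nontrivial W := Submodule.nontrivial_iff_ne_bot.2 hW0
  have hU0 : U ≠ ⊥ := by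
    intro h
    apply hW1
    have := hc.sup_eq_top
    rwa [h, sup_bot_eq] at this
  have hUn : Nontrivial U := Submodule.nontrivial_iff_ne_bot.2 hU0
  have p1 : 0 < Module.finrank ℂ W := Module.finrank_pos
  have p2 : 0 < Module.finrank ℂ U := Module.finrank_pos
  obtain ⟨k1, hk1, e1⟩ := ih _ (by omega) W W'.toRepresentation rfl
  obtain ⟨k2, hk2, e2⟩ := ih _ (by omega) U U'.toRepresentation rfl
  refine ⟨k1 + k2, by omega, ?_⟩
  push_cast
  rw [← e1, ← e2]
  have htr : ∀ g, LinearMap.trace ℂ V (ρ g) = LinearMap.trace ℂ W (W'.toRepresentation g) +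
      LinearMap.trace ℂ U (U'.toRepresentation g) := fun g => by
    rw [← LinearMap.trace_prodMap', ← LinearMap.trace_conj' _ (Submodule.prodEquivOfIsCompl W U hc)]
    congr 1
    ext v
    obtain ⟨⟨w, u⟩, rfl⟩ := (Submodule.prodEquivOfIsCompl W U hc).surjective v
    simp [LinearEquiv.conj_apply]
    rfl
  simp only [twInd, htr, Finset.sum_add_distrib, mul_add]

section induced

variable {S V : Type} [Group S] [Fintype S] [AddCommGroup V] [Module ℂ V] [FiniteDimensional ℂ V]
  {A : Subgroup S}

noncomputable def extZ (ρ : Representation ℂ A V) (x : S) : V →ₗ[ℂ] V :=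
  if h : x ∈ A then ρ ⟨x, h⟩ else 0

theorem extZ_mem (ρ : Representation ℂ A V) (x : A) : extZ ρ (x : S) = ρ x := by
  simp [extZ]

theorem extZ_not_mem (ρ : Representation ℂ A V) {x : S} (h : x ∉ A) : extZ ρ x = 0 := by
  simp [extZ, h]

theorem extZ_mul (ρ : Representation ℂ A V) (hA : ∀ x y : S, x * y ∈ A ↔ (x ∈ A ↔ y ∈ A))
    (s : S) (hs : s * s = 1) (hsA : s ∉ A) (x y : S) :
    extZ ρ (x * y) = extZ ρ x * extZ ρ y + extZ ρ (x * s) * extZ ρ (s * y) := by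
  have hm : ∀ x y : S, x ∈ A → y ∈ A → extZ ρ (x * y) = extZ ρ x * extZ ρ y := fun x y hx hy => by
    rw [extZ_mem ρ ⟨x, hx⟩, extZ_mem ρ ⟨y, hy⟩, ← map_mul, ← extZ_mem]; rfl
  by_cases hx : x ∈ A <;> by_cases hy : y ∈ A
  · rw [extZ_not_mem ρ (x := x * s) (by rw [hA]; tauto), zero_mul, add_zero, hm x y hx hy]
  · rw [extZ_not_mem ρ (x := x * y) (by rw [hA]; tauto),
      extZ_not_mem ρ (x := x * s) (by rw [hA]; tauto), extZ_not_mem ρ hy]; simp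
  · rw [extZ_not_mem ρ (x := x * y) (by rw [hA]; tauto),
      extZ_not_mem ρ (x := s * y) (by rw [hA]; tauto), extZ_not_mem ρ hx]; simp
  · rw [← hm (x * s) (s * y) (by rw [hA]; tauto) (by rw [hA]; tauto), extZ_not_mem ρ hx, zero_mul,
      zero_add]
    congr 1
    rw [mul_assoc, ← mul_assoc s, hs, one_mul]

noncomputable def indRep (ρ : Representation ℂ A V) (hA : ∀ x y : S, x * y ∈ A ↔ (x ∈ A ↔ y ∈ A))
    (s : S) (hs : s * s = 1) (hsA : s ∉ A) : Representation ℂ S (V × V) where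
  toFun x := LinearMap.prod
    (LinearMap.coprod (extZ ρ x) (extZ ρ (x * s)))
    (LinearMap.coprod (extZ ρ (s * x)) (extZ ρ (s * x * s)))
  map_one' := by
    have h1 : extZ ρ (1 : S) = 1 := by rw [← map_one ρ, ← extZ_mem]; rfl
    have h0 := extZ_not_mem ρ hsA
    ext v <;> simp [h1, h0, hs]
  map_mul' x y := by
    have e := extZ_mul ρ hA s hs hsA
    have e1 : extZ ρ (x * y * s) = extZ ρ x * extZ ρ (y*s) + extZ ρ (x*s) * extZ ρ (s*(y*s)) := by rw [mul_assoc x y s]; exact e x (y * s)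
    have e2 : extZ ρ (s * (x * y)) = extZ ρ (s*x) * extZ ρ y + extZ ρ (s*x*s) * extZ ρ (s*y) := by rw [← mul_assoc]; exact e (s * x) y
    have e3 : extZ ρ (s * (x * y) * s) = extZ ρ (s*x) * extZ ρ (y*s) + extZ ρ (s*x*s) * extZ ρ (s*(y*s)) := by
      rw [← mul_assoc, mul_assoc]; exact e (s * x) (y * s)
    rw [e1, e2, e3, e x y]
    ext v <;> simp [mul_assoc]

theorem trace_indRep (ρ : Representation ℂ A V) (hA : ∀ x y : S, x * y ∈ A ↔ (x ∈ A ↔ y ∈ A))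
    (s : S) (hs : s * s = 1) (hsA : s ∉ A) (x : S) (hx : x ∈ A) :
    LinearMap.trace ℂ _ (indRep ρ hA s hs hsA x) =
      LinearMap.trace ℂ _ (extZ ρ x) + LinearMap.trace ℂ _ (extZ ρ (s * x * s)) := by
  rw [← LinearMap.trace_prodMap']
  congr 1
  have h1 : extZ ρ (s * x) = 0 := extZ_not_mem ρ (by rw [hA]; tauto)
  have h2 : extZ ρ (x * s) = 0 := extZ_not_mem ρ (by rw [hA]; tauto)
  ext v <;> simp [indRep, h1, h2]

theorem sum_split [Fintype A] (hA : ∀ x y : S, x * y ∈ A ↔ (x ∈ A ↔ y ∈ A))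
    (s : S) (hs : s * s = 1) (hsA : s ∉ A) (f : S → ℂ) :
    ∑ x, f x = ∑ a : A, f a + ∑ a : A, f (s * a) := by
  have h1 : ∑ a : A, f a = ∑ x, if x ∈ A then f x else 0 := by
    rw [← Finset.sum_filter]
    exact (Finset.sum_subtype _ (by simp) f).symm
  have h2 : ∑ a : A, f (s * a) = ∑ x, if x ∈ A then 0 else f x := by
    have : ∑ a : A, f (s * a) = ∑ x, if x ∈ A then f (s * x) else 0 := by
      rw [← Finset.sum_filter]
      exact (Finset.sum_subtype _ (by simp) (fun x => f (s * x))).symm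
    rw [this]
    refine Fintype.sum_equiv (Equiv.mulLeft s) _ _ fun x => ?_
    have : s * x ∈ A ↔ ¬ x ∈ A := by rw [hA]; tauto
    by_cases hx : x ∈ A <;> simp [hx, this]
  rw [h1, h2, ← Finset.sum_add_distrib]
  refine Finset.sum_congr rfl fun x _ => ?_
  by_cases hx : x ∈ A <;> simp [hx]

/-- conjugation by `s` on an index two subgroup -/
def conjS (hA : ∀ x y : S, x * y ∈ A ↔ (x ∈ A ↔ y ∈ A))
    (s : S) (hs : s * s = 1) (hsA : s ∉ A) : A →* A where
  toFun a := ⟨s * a * s, by rw [hA, hA]; have := a.2; tauto⟩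
  map_one' := by ext; simp [hs]
  map_mul' a b := by
    ext
    simp only [Subgroup.coe_mul]
    calc s * (a * b) * s = s * a * 1 * (b * s) := by group
      _ = _ := by rw [← hs]; group

theorem conjS_conjS (hA : ∀ x y : S, x * y ∈ A ↔ (x ∈ A ↔ y ∈ A))
    (s : S) (hs : s * s = 1) (hsA : s ∉ A) (a : A) :
    conjS hA s hs hsA (conjS hA s hs hsA a) = a := by
  ext
  change s * (s * a * s) * s = a
  calc s * (s * a * s) * s = (s * s) * a * (s * s) := by group
    _ = a := by rw [hs]; simp

theorem twInd_indRep [Fintype A] (ρ : Representation ℂ A V) (hA : ∀ x y : S, x * y ∈ A ↔ (x ∈ A ↔ y ∈ A))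
    (s : S) (hs : s * s = 1) (hsA : s ∉ A) :
    twInd (indRep ρ hA s hs hsA) (MonoidHom.id _) =
      twInd ρ (MonoidHom.id _) + twInd ρ (conjS hA s hs hsA) := by
  have hcard : (Fintype.card S : ℂ) = 2 * Fintype.card A := by
    have := sum_split hA s hs hsA (fun _ => 1)
    simpa [two_mul] using this
  have hsq : ∀ x : S, x * x ∈ A := fun x => by rw [hA]
  have h1 : ∑ x, LinearMap.trace ℂ _ (indRep ρ hA s hs hsA (x * x)) =
      2 * ∑ x, LinearMap.trace ℂ _ (extZ ρ (x * x)) := by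
    rw [Finset.sum_congr rfl fun x _ => trace_indRep ρ hA s hs hsA (x * x) (hsq x),
      Finset.sum_add_distrib, two_mul]
    congr 1
    refine Fintype.sum_equiv ((Equiv.mulLeft s).trans (Equiv.mulRight s)) _ _ fun x => ?_
    congr 2
    simp only [Equiv.trans_apply, Equiv.coe_mulLeft, Equiv.coe_mulRight]
    calc s * (x * x) * s = s * x * 1 * x * s := by group
      _ = _ := by rw [← hs]; group
  have h2 : ∑ x, LinearMap.trace ℂ _ (extZ ρ (x * x)) =
      ∑ a : A, LinearMap.trace ℂ _ (ρ (a * a)) +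
      ∑ a : A, LinearMap.trace ℂ _ (ρ (conjS hA s hs hsA a * a)) := by
    rw [sum_split hA s hs hsA]
    congr 1
    · refine Finset.sum_congr rfl fun a _ => ?_
      rw [← extZ_mem]; rfl
    · refine Finset.sum_congr rfl fun a _ => ?_
      rw [← extZ_mem]
      congr 2
      simp [conjS, mul_assoc]
  simp only [twInd, MonoidHom.id_apply, h1, h2, hcard]
  rw [← mul_add]
  have : (Fintype.card A : ℂ) ≠ 0 := by simp [Fintype.card_ne_zero]
  field_simp

end induced

theorem pm_lemma {a b : ℂ} (ha : a = 0 ∨ a = 1 ∨ a = -1) (hb : b = 0 ∨ b = 1 ∨ b = -1)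
    {k : ℕ} (hk : 0 < k) (h : a + b = k) : a ≠ -1 ∧ b ≠ -1 := by
  have hk' : (1 : ℝ) ≤ k := by exact_mod_cast hk
  have hre := congrArg Complex.re h
  simp only [Complex.add_re, Complex.natCast_re] at hre
  constructor
  · rintro rfl
    rcases hb with rfl | rfl | rfl <;> norm_num at hre <;> linarith
  · rintro rfl
    rcases ha with rfl | rfl | rfl <;> norm_num at hre <;> linarith

theorem fs_values {G V : Type*} [Group G] [Fintype G] [AddCommGroup V] [Module ℂ V]
    [FiniteDimensional ℂ V]
    {ρ : Representation ℂ G V} (h : IrrRep ρ) (τ : G →* G) (hτ : ∀ g, τ (τ g) = g) :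
    twInd ρ τ = 0 ∨ twInd ρ τ = 1 ∨ twInd ρ τ = -1 := by
  rcases fs_trichotomy h τ hτ with ⟨h, -⟩ | ⟨ω, -, -, ε, h | h, -, e⟩
  · exact Or.inl h
  · exact Or.inr (Or.inl (e.trans h))
  · exact Or.inr (Or.inr (e.trans h))

theorem alt_mul_mem {α : Type} [Fintype α] (x y : Equiv.Perm α) :
    x * y ∈ alternatingGroup α ↔ (x ∈ alternatingGroup α ↔ y ∈ alternatingGroup α) := by
  simp only [Equiv.Perm.mem_alternatingGroup, map_mul]
  rcases Int.units_eq_one_or (Equiv.Perm.sign x) with h | h <;>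
  rcases Int.units_eq_one_or (Equiv.Perm.sign y) with h' | h' <;> simp [h, h']

/-- Core: for `p` any permutation, the sum over the coset. -/
theorem alt_core {α V : Type} [Fintype α] [AddCommGroup V] [Module ℂ V]
    [FiniteDimensional ℂ V] {ρ : Representation ℂ (alternatingGroup α) V} (h : IrrRep ρ)
    (p : Equiv.Perm α) (ν : ℂ)
    (hν : ν = (Fintype.card (alternatingGroup α) : ℂ)⁻¹ * ∑ a : alternatingGroup α,
      LinearMap.trace ℂ V (extZ ρ ((p * a) * (p * a)))) : ν = 0 ∨ ν = 1 := by
  have := h.nontriv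
  have v1 := fs_values h (MonoidHom.id _) (fun _ => rfl)
  by_cases hp : p ∈ alternatingGroup α
  · have e : ν = twInd ρ (MonoidHom.id _) := by
      rw [hν, twInd]
      congr 1
      refine Fintype.sum_equiv (Equiv.mulLeft ⟨p, hp⟩) _ _ fun a => ?_
      rw [← extZ_mem]; rfl
    suffices twInd ρ (MonoidHom.id _) ≠ -1 by rw [e]; tauto
    by_cases hex : ∃ x y : α, x ≠ y
    · obtain ⟨x, y, hxy⟩ := hex
      have hsA : Equiv.swap x y ∉ alternatingGroup α := by
        rw [Equiv.Perm.mem_alternatingGroup, Equiv.Perm.sign_swap hxy]; decide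
      have v2 := fs_values h (conjS alt_mul_mem _ (Equiv.swap_mul_self x y) hsA)
        (conjS_conjS alt_mul_mem _ (Equiv.swap_mul_self x y) hsA)
      obtain ⟨k, hk, hk'⟩ := perm_ind_pos _ _ (indRep ρ alt_mul_mem _ (Equiv.swap_mul_self x y) hsA) rfl
      rw [twInd_indRep] at hk'
      exact (pm_lemma v1 v2 hk hk').1
    · have hsub : Subsingleton α := ⟨fun x y => by_contra fun hh => hex ⟨x, y, hh⟩⟩
      have : ∀ a : alternatingGroup α, a = 1 := fun a =>
        Subtype.ext (Equiv.ext fun x => Subsingleton.elim _ _)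
      have hu : Unique (alternatingGroup α) := ⟨⟨1⟩, this⟩
      intro hh
      simp only [twInd, this, Finset.sum_const, map_one, mul_one, LinearMap.trace_one,
        Finset.card_univ, nsmul_eq_mul, MonoidHom.id_apply] at hh
      rw [← mul_assoc, inv_mul_cancel₀ (Nat.cast_ne_zero.2 Fintype.card_ne_zero), one_mul] at hh
      have := congrArg Complex.re hh
      simp at this
      have h3 : (0 : ℝ) ≤ Module.finrank ℂ V := Nat.cast_nonneg _
      linarith
  · have hex : ∃ x y : α, x ≠ y := by
      by_contra! hh
      apply hp
      have : p = 1 := by ext x; exact hh _ _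
      rw [this]; exact one_mem _
    obtain ⟨x, y, hxy⟩ := hex
    have hsA : Equiv.swap x y ∉ alternatingGroup α := by
      rw [Equiv.Perm.mem_alternatingGroup, Equiv.Perm.sign_swap hxy]; decide
    have v2 := fs_values h (conjS alt_mul_mem _ (Equiv.swap_mul_self x y) hsA)
      (conjS_conjS alt_mul_mem _ (Equiv.swap_mul_self x y) hsA)
    obtain ⟨k, hk, hk'⟩ := perm_ind_pos _ _ (indRep ρ alt_mul_mem _ (Equiv.swap_mul_self x y) hsA) rfl
    rw [twInd_indRep] at hk'
    have h2 := (pm_lemma v1 v2 hk hk').2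
    have e : ν = twInd ρ (conjS alt_mul_mem _ (Equiv.swap_mul_self x y) hsA) := by
      rw [hν, twInd]
      congr 1
      have hm : Equiv.swap x y * p ∈ alternatingGroup α := by rw [alt_mul_mem]; tauto
      refine Fintype.sum_equiv (Equiv.mulLeft ⟨_, hm⟩) _ _ fun a => ?_
      rw [← extZ_mem]
      congr 2
      simp [conjS, mul_assoc]
    rw [e]; tauto


theorem alt_core_dec {α V : Type} [DecidableEq α] [Fintype α] [AddCommGroup V] [Module ℂ V]
    [FiniteDimensional ℂ V] {ρ : Representation ℂ (alternatingGroup α) V} (h : IrrRep ρ)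
    (p : Equiv.Perm α) :
    ((Fintype.card (alternatingGroup α) : ℂ)⁻¹ * ∑ a : alternatingGroup α,
      LinearMap.trace ℂ V (extZ ρ ((p * (a : Equiv.Perm α)) * (p * (a : Equiv.Perm α))))) = 0 ∨
    ((Fintype.card (alternatingGroup α) : ℂ)⁻¹ * ∑ a : alternatingGroup α,
      LinearMap.trace ℂ V (extZ ρ ((p * (a : Equiv.Perm α)) * (p * (a : Equiv.Perm α))))) = 1 := by
  rename_i inst _ _ _ _
  have hi : inst = fun a b => Classical.propDecidable (a = b) := Subsingleton.elim _ _
  subst hi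
  exact alt_core h p _ rfl


/-! ### Reduction of the indicator to the core statement -/

theorem irr_of_simple {G : Type} [Group G] [Fintype G] (V : FDRep ℂ G) (hV : Simple V) :
    IrrRep (V := V) (V.ρ : Representation ℂ G V) := by
  have hfin := finrank_endomorphism_simple_eq_one ℂ V
  have hs := (finrank_eq_one_iff_of_nonzero' (𝟙 V) (id_nonzero V)).1 hfin
  have hnt : Nontrivial V := by
    by_contra hn
    rw [not_nontrivial_iff_subsingleton] at hn
    apply id_nonzero V
    ext x
    exact Subsingleton.elim (α := V) _ _
  refine IrrRep.of_schur fun T hT => ?_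
  let f : V ⟶ V := ⟨InducedCategory.homMk (ModuleCat.ofHom T), fun g => by
    ext1
    ext x
    exact LinearMap.congr_fun (hT g) x⟩
  obtain ⟨c, hc⟩ := hs f
  refine ⟨c, ?_⟩
  have := congrArg (fun q : V ⟶ V => q.hom.hom.hom) hc
  exact this.symm

theorem IrrRep.comp_surj {G K V : Type*} [Group G] [Group K] [AddCommGroup V] [Module ℂ V]
    {ρ : Representation ℂ G V} (h : IrrRep ρ) (φ : K →* G) (hφ : Function.Surjective φ) :
    IrrRep (G := K) (V := V) (ρ.comp φ) := by
  refine ⟨h.nontriv, fun W hW => h.sub W fun g w hw => ?_⟩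
  obtain ⟨k, rfl⟩ := hφ g
  exact hW k w hw

theorem mem_stabCoset {G : Type*} [Group G] (H : Subgroup G) (g z : G) :
    z ∈ stabCoset H g ↔ z ∈ H ∧ g⁻¹ * z * g ∈ H := by
  rw [stabCoset, Subgroup.mem_inf]
  refine and_congr_right fun _ => ?_
  constructor
  · rintro ⟨w, hw, rfl⟩
    have : g⁻¹ * (g * w * g⁻¹) * g = w := by group
    simpa [this] using hw
  · intro h
    exact ⟨_, h, by simp [mul_assoc]⟩

theorem coset_iff {G : Type*} [Group G] (H : Subgroup G) (g x : G) (hx : x ∈ H)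
    (hsq : (g * x) ^ 2 ∈ stabCoset H g) (z : G) :
    (x * z ∈ H ∧ (g * (x * z)) ^ 2 ∈ stabCoset H g) ↔ z ∈ stabCoset H g := by
  rw [mem_stabCoset] at hsq
  rw [mem_stabCoset, mem_stabCoset, Subgroup.mul_mem_cancel_left H hx]
  constructor
  · rintro ⟨hz, h1, -⟩
    refine ⟨hz, ?_⟩
    have e : g⁻¹ * z * g = x * (((g * x) ^ 2)⁻¹ * ((g * (x * z)) ^ 2 * z⁻¹)) * x⁻¹ := by
      simp only [pow_two]; group
    rw [e]
    exact H.mul_mem (H.mul_mem hx (H.mul_mem (H.inv_mem hsq.1) (H.mul_mem h1 (H.inv_mem hz))))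
      (H.inv_mem hx)
  · rintro ⟨hz, h1⟩
    have e : (g * (x * z)) ^ 2 = (g * x) ^ 2 * (x⁻¹ * (g⁻¹ * z * g) * x) * z := by
      simp only [pow_two]; group
    have h2 : (g * (x * z)) ^ 2 ∈ H := by
      rw [e]
      exact H.mul_mem (H.mul_mem hsq.1 (H.mul_mem (H.mul_mem (H.inv_mem hx) h1) hx)) hz
    have e2 : g⁻¹ * (g * (x * z)) ^ 2 * g = x * z * (g * (x * z)) ^ 2 * z⁻¹ * x⁻¹ := by
      simp only [pow_two]; group
    refine ⟨hz, h2, ?_⟩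
    rw [e2]
    exact H.mul_mem (H.mul_mem (H.mul_mem (H.mul_mem hx hz) h2) (H.inv_mem hz)) (H.inv_mem hx)

theorem mem_stab_perm (n ℓ : ℕ) (g z : Equiv.Perm (Fin n)) :
    z ∈ stabCoset (fixSubgroup n ℓ ⊓ alternatingGroup (Fin n)) g ↔
      Equiv.Perm.sign z = 1 ∧ ∀ i : Fin n, ¬ ((i : ℕ) < ℓ ∧ ((g⁻¹ i : Fin n) : ℕ) < ℓ) → z i = i := by
  have hfix : ∀ w : Equiv.Perm (Fin n), w ∈ fixSubgroup n ℓ ↔ ∀ i : Fin n, ℓ ≤ (i : ℕ) → w i = i :=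
    fun _ => Iff.rfl
  rw [mem_stabCoset, Subgroup.mem_inf, Subgroup.mem_inf, hfix, hfix,
    Equiv.Perm.mem_alternatingGroup, Equiv.Perm.mem_alternatingGroup]
  constructor
  · rintro ⟨⟨h1, h2⟩, h3, -⟩
    refine ⟨h2, fun i hi => ?_⟩
    by_cases hl : ℓ ≤ (i : ℕ)
    · exact h1 i hl
    · have h4 := h3 (g⁻¹ i) (by omega)
      have h5 : g (g⁻¹ i) = i := g.apply_symm_apply i
      simp only [Equiv.Perm.mul_apply, h5] at h4
      exact (g⁻¹).injective h4
  · rintro ⟨h1, h2⟩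
    refine ⟨⟨fun i hi => h2 i (by omega), h1⟩, fun i hi => ?_, ?_⟩
    · simp only [Equiv.Perm.mul_apply]
      rw [h2 (g i) (by simp; omega)]
      simp
    · simp [h1, mul_comm]

set_option maxHeartbeats 2000000 in
theorem main_red (n ℓ : ℕ) (g : Equiv.Perm (Fin n))
    (V : FDRep ℂ ↥(stabCoset (fixSubgroup n ℓ ⊓ alternatingGroup (Fin n)) g)) (hV : Simple V) :
    nuInd (fixSubgroup n ℓ ⊓ alternatingGroup (Fin n)) g 2 V.character = 0 ∨
      nuInd (fixSubgroup n ℓ ⊓ alternatingGroup (Fin n)) g 2 V.character = 1 := by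
  by_cases hex : ∃ x : Equiv.Perm (Fin n), x ∈ (fixSubgroup n ℓ ⊓ alternatingGroup (Fin n)) ∧
    (g * x) ^ 2 ∈ stabCoset (fixSubgroup n ℓ ⊓ alternatingGroup (Fin n)) g
  swap
  · left
    rw [nuInd, finsum_eq_zero_of_forall_eq_zero, mul_zero]
    intro x
    rw [dif_neg fun h => hex ⟨x, h⟩]
  obtain ⟨x0, hx0, hsq⟩ := hex
  let T : Fin n → Prop := fun i => (i : ℕ) < ℓ ∧ ((g⁻¹ i : Fin n) : ℕ) < ℓ
  have hmem := mem_stab_perm n ℓ g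
  have hcos := coset_iff _ g x0 hx0 hsq
  -- preservation of the support set
  have hLpres : ∀ w : Equiv.Perm (Fin n), w ∈ fixSubgroup n ℓ →
      ∀ i : Fin n, ((w i : Fin n) : ℕ) < ℓ ↔ (i : ℕ) < ℓ := by
    intro w hw i
    constructor
    · intro h
      by_contra hc
      rw [hw i (by omega)] at h
      exact hc h
    · intro h
      by_contra hc
      have h1 := hw (w i) (by omega)
      rw [w.injective h1] at hc
      exact hc h
  have hT : ∀ i, T ((g * x0) i) ↔ T i := by
    intro i
    have h1 : g⁻¹ ((g * x0) i) = x0 i := by simp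
    have h2 := hLpres _ hx0.1 i
    have h3 := hLpres _ ((mem_stabCoset _ _ _).1 hsq).1.1 ((g * x0)⁻¹ i)
    have h4 : ((g * x0) ^ 2) ((g * x0)⁻¹ i) = (g * x0) i := by
      have h5 : (g * x0) ((g * x0)⁻¹ i) = i := (g * x0).apply_symm_apply i
      rw [pow_two, Equiv.Perm.mul_apply, h5]
    have h5 := hLpres _ ((fixSubgroup n ℓ).inv_mem hx0.1) (g⁻¹ i)
    have h6 : (g * x0)⁻¹ i = x0⁻¹ (g⁻¹ i) := by rw [mul_inv_rev]; rfl
    rw [h4, h6, h5] at h3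
    simp only [T]
    rw [h1, h2, h3, and_comm]
  let p : Equiv.Perm (Subtype T) := (g * x0).subtypePerm hT
  have hof : ∀ a : alternatingGroup (Subtype T), Equiv.Perm.ofSubtype (a : Equiv.Perm (Subtype T)) ∈
      stabCoset (fixSubgroup n ℓ ⊓ alternatingGroup (Fin n)) g := by
    intro a
    rw [hmem]
    refine ⟨?_, fun i hi => Equiv.Perm.ofSubtype_apply_of_not_mem _ hi⟩
    rw [Equiv.Perm.sign_ofSubtype]
    exact a.2
  let φ : alternatingGroup (Subtype T) →*
      stabCoset (fixSubgroup n ℓ ⊓ alternatingGroup (Fin n)) g :=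
    { toFun := fun a => ⟨Equiv.Perm.ofSubtype (a : Equiv.Perm (Subtype T)), hof a⟩
      map_one' := by ext1; simp
      map_mul' := fun a b => by ext1; simp }
  have hφi : Function.Injective φ := fun a b hab => by
    have := congrArg Subtype.val hab
    exact Subtype.ext (Equiv.Perm.ofSubtype_injective this)
  have hφs : Function.Surjective φ := by
    rintro ⟨z, hz⟩
    have hz' := (hmem z).1 hz
    have hsup : ∀ i, z i ≠ i → T i := fun i hi => by
      by_contra hc
      exact hi (hz'.2 i hc)
    have hzT : ∀ i, T (z i) ↔ T i := by
      intro i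
      by_cases h : z i = i
      · rw [h]
      · refine iff_of_true ?_ (hsup i h)
        apply hsup
        exact fun hh => h (z.injective hh)
    refine ⟨⟨z.subtypePerm hzT, ?_⟩, ?_⟩
    · rw [Equiv.Perm.mem_alternatingGroup, Equiv.Perm.sign_subtypePerm _ _ hsup]
      exact hz'.1
    · ext1
      exact Equiv.Perm.ofSubtype_subtypePerm hzT hsup
  have hcard : Nat.card (stabCoset (fixSubgroup n ℓ ⊓ alternatingGroup (Fin n)) g) =
      Fintype.card (alternatingGroup (Subtype T)) := by
    rw [← Nat.card_eq_fintype_card]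
    exact (Nat.card_congr (Equiv.ofBijective φ ⟨hφi, hφs⟩)).symm
  have hsqa : ∀ a : alternatingGroup (Subtype T),
      (g * (x0 * Equiv.Perm.ofSubtype (a : Equiv.Perm (Subtype T)))) ^ 2 =
        Equiv.Perm.ofSubtype ((p * (a : Equiv.Perm (Subtype T))) * (p * (a : Equiv.Perm (Subtype T)))) := by
    intro a
    ext1 i
    by_cases hi : T i
    · rw [Equiv.Perm.ofSubtype_apply_of_mem _ hi]
      have hcoe : ∀ j : Subtype T, (g * (x0 * Equiv.Perm.ofSubtype (a : Equiv.Perm (Subtype T)))) (j : Fin n) =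
          ((p * (a : Equiv.Perm (Subtype T))) j : Subtype T) := by
        intro j
        simp [p]
      rw [pow_two, Equiv.Perm.mul_apply, hcoe ⟨i, hi⟩, hcoe]
      rfl
    · rw [Equiv.Perm.ofSubtype_apply_of_not_mem _ hi]
      exact ((hmem _).1 ((hcos _).2 (hof a)).2).2 i hi
  have hirr := (irr_of_simple V hV).comp_surj φ hφs
  have key := alt_core_dec hirr p
  have hconj : nuInd (fixSubgroup n ℓ ⊓ alternatingGroup (Fin n)) g 2 V.character =
      (starRingEnd ℂ) ((Fintype.card (alternatingGroup (Subtype T)) : ℂ)⁻¹ *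
        ∑ a : alternatingGroup (Subtype T),
        LinearMap.trace ℂ V (extZ (A := alternatingGroup (Subtype T))
          (V.ρ.comp φ : Representation ℂ (alternatingGroup (Subtype T)) V) ((p * (a : Equiv.Perm (Subtype T))) * (p * (a : Equiv.Perm (Subtype T)))))) := by
    rw [nuInd, finsum_eq_sum_of_fintype, hcard, map_mul, map_inv₀, Complex.conj_natCast, map_sum]
    congr 1
    symm
    refine Fintype.sum_of_injective
      (fun a : alternatingGroup (Subtype T) => x0 * Equiv.Perm.ofSubtype (a : Equiv.Perm (Subtype T)))
      ?_ _ _ ?_ ?_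
    · intro a b hab
      exact Subtype.ext (Equiv.Perm.ofSubtype_injective (mul_left_cancel hab))
    · intro x hx
      rw [dif_neg]
      intro hh
      apply hx
      have hx' : x0 * (x0⁻¹ * x) = x := by group
      rw [← hx'] at hh
      obtain ⟨a, ha⟩ := hφs ⟨x0⁻¹ * x, (hcos _).1 hh⟩
      refine ⟨a, ?_⟩
      have : Equiv.Perm.ofSubtype (a : Equiv.Perm (Subtype T)) = x0⁻¹ * x := congrArg Subtype.val ha
      simp only [this, hx']
    · intro a
      rw [dif_pos ((hcos _).2 (hof a))]
      have hm : (p * (a : Equiv.Perm (Subtype T))) * (p * (a : Equiv.Perm (Subtype T))) ∈ alternatingGroup (Subtype T) := by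
        rw [Equiv.Perm.mem_alternatingGroup, map_mul, Int.units_mul_self]
      congr 1
      rw [extZ, dif_pos hm]
      change LinearMap.trace ℂ V (V.ρ (φ ⟨_, hm⟩)) = LinearMap.trace ℂ V (V.ρ _)
      have hz : φ ⟨_, hm⟩ = ⟨_, ((hcos _).2 (hof a)).2⟩ := Subtype.ext (hsqa a).symm
      rw [hz]
  rw [hconj]
  rcases key with h | h
  · left; rw [h, map_zero]
  · right; rw [h, map_one]

/-- Let `A_ℓ ⊆ S_n` (`ℓ < n`) be the even permutations fixing each of `ℓ+1,…,n`. All simple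
objects of `C(S_n, A_ℓ)` have Frobenius–Schur indicator `0` or `1`: for every `g ∈ S_n` and
every irreducible complex character `χ` of `S(g) = A_ℓ ∩ gA_ℓg⁻¹`, `ν₂(g,χ) ∈ {0,1}`. -/
theorem stmt_15 (n ℓ : ℕ) (hl : ℓ < n) (g : Equiv.Perm (Fin n)) :
    ∀ (V : FDRep ℂ ↥(stabCoset (fixSubgroup n ℓ ⊓ alternatingGroup (Fin n)) g)), Simple V →
      nuInd (fixSubgroup n ℓ ⊓ alternatingGroup (Fin n)) g 2 V.character = 0 ∨
      nuInd (fixSubgroup n ℓ ⊓ alternatingGroup (Fin n)) g 2 V.character = 1 := by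
  exact fun V hV => main_red n ℓ g V hV
end
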